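/- arXiv:math/0502331 — 2 statements merged into one kernel-verified Lean document; each statement's English description precedes it below -/
import Mathlib

section
/- Let s ∈ {1,…,n−1}, let B be the k-subalgebra of A generated by the X_{ij} with 1 ≤ i ≤ n and 1 ≤ j ≤ s, and let C be the k-subalgebra of A generated by the X_{ij} with 1 ≤ i ≤ n and s+1 ≤ j ≤ n. Then the multiplication map μ : B ⊗_k C → A, b ⊗ c ↦ bc, is an isomorphism of k-vector spaces. -/
/-!
Multiplication `B ⊗ C → A` is bijective.

Surjectivity is a reordering argument. For `j < m` the relations write `X_{lm} X_{ij}` as a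
combination of `X_{ij} X_{lm}` and `X_{lj} X_{im}`, so a generator of `C` can be moved to the right of
any element of `B` (`mulMap_surjective`).

Injectivity comes from an action of `A` on `A ⊗ A`. The reordering rule has the form
`X_{lm} b = ∑_p σ(b)_{lp} X_{pm}` for an algebra homomorphism `σ : A → M_n(A)` which does not depend
on `m` (`exists_sigma`). Let `X_{ij}` with `j ≤ s` act by left multiplication on the first factor
and let `X_{lm}` with `m > s` act by `a ⊗ b ↦ ∑_p σ(a)_{lp} ⊗ X_{pm} b`. If these operators satisfy
the defining relations (`exists_rtt_end`), then `bc` sends `1 ⊗ 1` to `b ⊗ c` for `b ∈ B` and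
`c ∈ C`, and injectivity follows from that of `B ⊗ C → A ⊗ A` (`injective_of_lift`).

To verify the relations they are put in the form `R T₁ T₂ = T₂ T₁ R` (`rtt_X`, `exists_lift`), which
is stable under products of matrices with commuting entries (`RTT.mul`). The operators for the
columns beyond `s` form the product of the matrix of entries of `σ` and the matrix of left
multiplications by the `X_{pm}`. Thus everything reduces to the RTT relations for the entries of
`σ`, which are checked on generators by an entrywise form of the Yang-Baxter equation
(`rtt_rho`, `rtt_sigma`). No PBW basis is needed.
-/

open scoped TensorProduct
open scoped Classical

noncomputable section

namespace QMat

variable (k : Type*) [Field k] (n : ℕ) (q : k)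

/-- Defining relations of the quantized coordinate ring `O_q(M_n(k))`. -/
inductive Rel : FreeAlgebra k (Fin n × Fin n) → FreeAlgebra k (Fin n × Fin n) → Prop
  | col {i l j : Fin n} (h : i < l) :
      Rel (FreeAlgebra.ι k (i, j) * FreeAlgebra.ι k (l, j))
        (q • (FreeAlgebra.ι k (l, j) * FreeAlgebra.ι k (i, j)))
  | row {i j m : Fin n} (h : j < m) :
      Rel (FreeAlgebra.ι k (i, j) * FreeAlgebra.ι k (i, m))
        (q • (FreeAlgebra.ι k (i, m) * FreeAlgebra.ι k (i, j)))
  | swap {i j l m : Fin n} (h1 : i < l) (h2 : m < j) :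
      Rel (FreeAlgebra.ι k (i, j) * FreeAlgebra.ι k (l, m))
        (FreeAlgebra.ι k (l, m) * FreeAlgebra.ι k (i, j))
  | mixed {i j l m : Fin n} (h1 : i < l) (h2 : j < m) :
      Rel (FreeAlgebra.ι k (i, j) * FreeAlgebra.ι k (l, m))
        (FreeAlgebra.ι k (l, m) * FreeAlgebra.ι k (i, j)
          + (q - q⁻¹) • (FreeAlgebra.ι k (i, m) * FreeAlgebra.ι k (l, j)))

/-- The quantized coordinate ring `A = O_q(M_n(k))`. -/
abbrev A : Type _ := RingQuot (Rel k n q)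

/-- The generator `X_{ij}` of `O_q(M_n(k))`. -/
def X (i j : Fin n) : A k n q :=
  RingQuot.mkAlgHom k (Rel k n q) (FreeAlgebra.ι k (i, j))

/-- The number of inversions `ℓ(σ)` of a permutation of `Fin t`. -/
def inversions {t : ℕ} (σ : Equiv.Perm (Fin t)) : ℕ :=
  (Finset.univ.filter fun p : Fin t × Fin t => p.1 < p.2 ∧ σ p.2 < σ p.1).card

/-- The quantum minor `[I|J]` (with junk value `0` when `|I| ≠ |J|`). -/
def qMinor (I J : Finset (Fin n)) : A k n q :=
  if h : I.card = J.card then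
    ∑ σ : Equiv.Perm (Fin I.card),
      ((-q) ^ inversions σ) •
        (List.ofFn fun l : Fin I.card =>
          X k n q (↑((I.orderIsoOfFin rfl) (σ l))) (↑((J.orderIsoOfFin h.symm) l))).prod
  else 0

/-- `ℓ(S;T) = #{(s,t) ∈ S×T : s > t}`. -/
def ell (S T : Finset (Fin n)) : ℕ :=
  ((S ×ˢ T).filter fun p => p.2 < p.1).card

/-- The `(-q)`-integer `[d]_{-q} = (-q)^{d-1} + (-q)^{d-3} + ⋯ + (-q)^{-(d-1)}`. -/
def negqInt (d : ℕ) : k :=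
  ∑ s ∈ Finset.range d, (-q) ^ ((d : ℤ) - 1 - 2 * (s : ℤ))

/-- `ξ_q(I;J) = [d₁]_{-q}⋯[d_m]_{-q}` where `d_l = |[1,r_l] ∩ J| - l + 1` for
`I = {r₁ < ⋯ < r_m}` (with junk value `1` when `|I| ≠ |J|`). -/
def xiq (I J : Finset (Fin n)) : k :=
  if _h : I.card = J.card then
    ∏ l : Fin I.card,
      negqInt k q
        ((J.filter fun x => x ≤ (↑((I.orderIsoOfFin rfl) l) : Fin n)).card - (l : ℕ))
  else 1

/-- The componentwise order `I ≤ J` on index sets of the same cardinality: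
writing `I = {i₁ < ⋯ < i_t}` and `J = {j₁ < ⋯ < j_t}`, we require `i_l ≤ j_l` for all `l`. -/
def setLE (I J : Finset (Fin n)) : Prop :=
  I.card = J.card ∧
    ∀ (h : I.card = J.card) (l : Fin I.card),
      (↑((I.orderIsoOfFin rfl) l) : Fin n) ≤ (↑((J.orderIsoOfFin h.symm) l) : Fin n)

/-- `S^♮ = (X ∩ Y) ⊔ ((X ∪ Y) ∖ S)` relative to the pair `(X, Y)`. -/
def snat (X Y S : Finset (Fin n)) : Finset (Fin n) :=
  (X ∩ Y) ∪ ((X ∪ Y) \ S)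

/-- `S_≤(X,Y) = {S ⊆ X ∪ Y : X ∩ Y ⊆ S, |S| = |X|, S ≤ X}`. -/
def sLE (X Y : Finset (Fin n)) : Finset (Finset (Fin n)) :=
  (X ∪ Y).powerset.filter fun S => X ∩ Y ⊆ S ∧ S.card = X.card ∧ setLE n S X

/-- `S_<(X,Y) = {S ⊆ X ∪ Y : X ∩ Y ⊆ S, |S| = |X|, S < X}`. -/
def sLT (X Y : Finset (Fin n)) : Finset (Finset (Fin n)) :=
  (sLE n X Y).filter fun S => S ≠ X

/-- `S_≥(X,Y) = {T ⊆ X ∪ Y : X ∩ Y ⊆ T, |T| = |X|, T ≥ X}`. -/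
def sGE (X Y : Finset (Fin n)) : Finset (Finset (Fin n)) :=
  (X ∪ Y).powerset.filter fun T => X ∩ Y ⊆ T ∧ T.card = X.card ∧ setLE n X T

/-- `S_>(X,Y) = {T ⊆ X ∪ Y : X ∩ Y ⊆ T, |T| = |X|, T > X}`. -/
def sGT (X Y : Finset (Fin n)) : Finset (Finset (Fin n)) :=
  (sGE n X Y).filter fun T => T ≠ X

/-- `L(S,X,Y) = ℓ((S∖S^♮)∪(Y∖X); X∖S) − ℓ((S∖S^♮)∪(Y∖X); S∖X)`. -/
def Lfun (S X Y : Finset (Fin n)) : ℤ :=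
  (ell n ((S \ snat n X Y S) ∪ (Y \ X)) (X \ S) : ℤ)
    - (ell n ((S \ snat n X Y S) ∪ (Y \ X)) (S \ X) : ℤ)

/-- `L^♮(T,X,Y) = ℓ((T^♮∖T)∪(X∖Y); T∖X) − ℓ((T^♮∖T)∪(X∖Y); X∖T)`. -/
def Lnat (T X Y : Finset (Fin n)) : ℤ :=
  (ell n ((snat n X Y T \ T) ∪ (X \ Y)) (T \ X) : ℤ)
    - (ell n ((snat n X Y T \ T) ∪ (X \ Y)) (X \ T) : ℤ)

/-- The form `A ⊗ A → k` given on pure tensors by `x ⊗ y ↦ f(x) g(y)`. -/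
def biform (f g : A k n q →ₗ[k] k) : (A k n q ⊗[k] A k n q) →ₗ[k] k :=
  (TensorProduct.lid k k).toLinearMap ∘ₗ TensorProduct.map f g

/-- Opposite multiplication `A ⊗ A → A`, `x ⊗ y ↦ y * x`. -/
def mulRev : (A k n q ⊗[k] A k n q) →ₗ[k] A k n q :=
  (LinearMap.mul' k (A k n q)) ∘ₗ (TensorProduct.comm k (A k n q) (A k n q)).toLinearMap

/-- `Σ (a₁ ⊗ b₁) ⊗ (a₂ ⊗ b₂)`, the regrouped double Sweedler decomposition of `a` and `b`. -/
def sweedler2 (Δ : A k n q →ₐ[k] A k n q ⊗[k] A k n q) (a b : A k n q) :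
    (A k n q ⊗[k] A k n q) ⊗[k] (A k n q ⊗[k] A k n q) :=
  (TensorProduct.tensorTensorTensorComm k (A k n q) (A k n q) (A k n q) (A k n q))
    (Δ a ⊗ₜ[k] Δ b)

/-- `Δ` is the standard comultiplication: `Δ(X_{ij}) = Σ_l X_{il} ⊗ X_{lj}`. -/
def IsComul (Δ : A k n q →ₐ[k] A k n q ⊗[k] A k n q) : Prop :=
  ∀ i j : Fin n, Δ (X k n q i j) = ∑ l : Fin n, X k n q i l ⊗ₜ[k] X k n q l j

/-- `ε` is the standard counit: `ε(X_{ij}) = δ_{ij}`. -/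
def IsCounit (ε : A k n q →ₐ[k] k) : Prop :=
  ∀ i j : Fin n, ε (X k n q i j) = if i = j then 1 else 0

/-- The bilinear form `r` satisfies the coquasitriangularity conditions (1.7)(i)-(iv)
together with the prescribed values (1.9) on the generators. -/
def IsRForm (Δ : A k n q →ₐ[k] A k n q ⊗[k] A k n q) (ε : A k n q →ₐ[k] k)
    (r : A k n q →ₗ[k] A k n q →ₗ[k] k) : Prop :=
  -- (i) `Σ r(a₁,b₁) a₂ b₂ = Σ r(a₂,b₂) b₁ a₁`
  (∀ a b : A k n q,
      (TensorProduct.lid k (A k n q))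
          ((TensorProduct.map (TensorProduct.lift r) (LinearMap.mul' k (A k n q)))
            (sweedler2 k n q Δ a b)) =
        (TensorProduct.rid k (A k n q))
          ((TensorProduct.map (mulRev k n q) (TensorProduct.lift r))
            (sweedler2 k n q Δ a b))) ∧
  -- (ii) `r(ab, c) = Σ r(a,c₁) r(b,c₂)`
  (∀ a b c : A k n q, r (a * b) c = biform k n q (r a) (r b) (Δ c)) ∧
  -- (iii) `r(a, bc) = Σ r(a₁,c) r(a₂,b)`
  (∀ a b c : A k n q, r a (b * c) = biform k n q (r.flip c) (r.flip b) (Δ a)) ∧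
  -- (iv) `r(a,1) = r(1,a) = ε(a)`
  (∀ a : A k n q, r a 1 = ε a ∧ r 1 a = ε a) ∧
  -- values on generators
  (∀ i j l m : Fin n,
      r (X k n q i j) (X k n q l m) =
        if i = j ∧ l = m ∧ i = l then q
        else if i = j ∧ l = m then 1
        else if l = j ∧ m = i ∧ j < i then q - q⁻¹
        else 0)

/-- `Σ f(a₁,b₁) g(a₂,b₂)`, the convolution-type pairing of two bilinear forms. -/
def convPair (Δ : A k n q →ₐ[k] A k n q ⊗[k] A k n q)
    (f g : A k n q →ₗ[k] A k n q →ₗ[k] k) (a b : A k n q) : k :=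
  (TensorProduct.lid k k)
    ((TensorProduct.map (TensorProduct.lift f) (TensorProduct.lift g))
      (sweedler2 k n q Δ a b))

end QMat

open QMat

namespace QMat

variable (k : Type*) [Field k] (n : ℕ) (q : k)

/-- The subalgebra generated by the `X_{ij}` with (1-based) column index `≤ s`. -/
def Bsub (s : ℕ) : Subalgebra k (A k n q) :=
  Algebra.adjoin k {a : A k n q | ∃ i j : Fin n, (j : ℕ) < s ∧ a = X k n q i j}

/-- The subalgebra generated by the `X_{ij}` with (1-based) column index `≥ s+1`. -/
def Csub (s : ℕ) : Subalgebra k (A k n q) :=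
  Algebra.adjoin k {a : A k n q | ∃ i j : Fin n, s ≤ (j : ℕ) ∧ a = X k n q i j}

/-- The multiplication map `B ⊗ₖ C → A`, `b ⊗ c ↦ bc`. -/
def mulMap (s : ℕ) : (Bsub k n q s ⊗[k] Csub k n q s) →ₗ[k] A k n q :=
  TensorProduct.lift
    (LinearMap.mk₂ k (fun b c => (b : A k n q) * (c : A k n q))
      (fun b b' c => by push_cast; rw [add_mul])
      (fun t b c => by push_cast; rw [smul_mul_assoc])
      (fun b c c' => by push_cast; rw [mul_add])
      (fun t b c => by push_cast; rw [mul_smul_comm]))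

end QMat

namespace QMat

/-! ### The defining relations in RTT form -/

section RTT

variable {k : Type*} [Field k] {n : ℕ} (q : k)

/-- The entry at row `(i, l)` and column `(j, m)` of the matrix identity `R M = N R`, where
`R = ∑ q^{δ_ab} E_aa ⊗ E_bb + (q - q⁻¹) ∑_{b < a} E_ab ⊗ E_ba`. The entry of `M` at row `(i, l)`
and column `(j, m)` is written `M i l j m`. -/
def Intertwines {E : Type*} [Ring E] [Algebra k E]
    (M N : Fin n → Fin n → Fin n → Fin n → E) (i l j m : Fin n) : Prop :=
  (if i = l then q else 1) • M i l j m + (if l < i then q - q⁻¹ else 0) • M l i j m =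
    (if j = m then q else 1) • N i l j m + (if j < m then q - q⁻¹ else 0) • N i l m j

/-- The relation `R T₁ T₂ = T₂ T₁ R` at row `(i, l)` and column `(j, m)`, for a matrix `T` with
entries in a possibly noncommutative algebra. -/
def RTT {E : Type*} [Ring E] [Algebra k E] (T : Fin n → Fin n → E) (i l j m : Fin n) : Prop :=
  Intertwines q (fun i l j m => T i j * T l m) (fun i l j m => T l m * T i j) i l j m

variable {q}

/-- If `R M = N R` and `R M' = N' R` then `R (M M') = (N N') R`. -/
theorem Intertwines.mul {E : Type*} [Ring E] [Algebra k E]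
    {M N M' N' : Fin n → Fin n → Fin n → Fin n → E} {i l j m : Fin n}
    (h : ∀ p p', Intertwines q M N i l p p') (h' : ∀ p p', Intertwines q M' N' p p' j m) :
    Intertwines q (fun i l j m => ∑ p, ∑ p', M i l p p' * M' p p' j m)
      (fun i l j m => ∑ p, ∑ p', N i l p p' * N' p p' j m) i l j m := by
  unfold Intertwines at *
  simp only [Finset.smul_sum, ← Finset.sum_add_distrib]
  calc _ = ∑ p, ∑ p', ((if i = l then q else 1) • M i l p p'
            + (if l < i then q - q⁻¹ else 0) • M l i p p') * M' p p' j m := by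
        simp only [add_mul, smul_mul_assoc]
    _ = ∑ p, ∑ p', (if p = p' then q else 1) • (N i l p p' * M' p p' j m)
          + ∑ p, ∑ p', (if p < p' then q - q⁻¹ else 0) • (N i l p' p * M' p p' j m) := by
        simp only [h, add_mul, smul_mul_assoc, Finset.sum_add_distrib]
    _ = ∑ p, ∑ p', (if p = p' then q else 1) • (N i l p p' * M' p p' j m)
          + ∑ p, ∑ p', (if p' < p then q - q⁻¹ else 0) • (N i l p p' * M' p' p j m) := by
        congr 1
        exact Finset.sum_comm
    _ = ∑ p, ∑ p', N i l p p' * ((if p = p' then q else 1) • M' p p' j m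
            + (if p' < p then q - q⁻¹ else 0) • M' p' p j m) := by
        simp only [mul_add, mul_smul_comm, Finset.sum_add_distrib]
    _ = _ := by
        simp only [h', mul_add, mul_smul_comm]

/-- The product of two RTT matrices with mutually commuting entries is again an RTT matrix. This is
the computation that makes `O_q(M_n(k))` a bialgebra. -/
theorem RTT.mul {E : Type*} [Ring E] [Algebra k E] {T S : Fin n → Fin n → E}
    (hTS : ∀ i j a b, Commute (T i j) (S a b)) {i l j m : Fin n}
    (hT : ∀ p p', RTT q T i l p p') (hS : ∀ p p', RTT q S p p' j m) :
    RTT q (fun i j => ∑ p, T i p * S p j) i l j m := by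
  have key := Intertwines.mul hT hS
  unfold RTT
  convert key using 1
  · ext i l j m
    simp only [Finset.sum_mul_sum]
    refine Finset.sum_congr rfl fun p _ => Finset.sum_congr rfl fun p' _ => ?_
    rw [mul_assoc, ← mul_assoc (S p j), ← (hTS l p' p j).eq]
    simp only [mul_assoc]
  · ext i l j m
    simp only [Finset.sum_mul_sum]
    rw [Finset.sum_comm]
    refine Finset.sum_congr rfl fun p _ => Finset.sum_congr rfl fun p' _ => ?_
    rw [mul_assoc, ← mul_assoc (S p' m), ← (hTS i p p' m).eq]
    simp only [mul_assoc]

theorem RTT.map {E E' : Type*} [Ring E] [Algebra k E] [Ring E'] [Algebra k E']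
    {T : Fin n → Fin n → E} {i l j m : Fin n} (h : RTT q T i l j m) (f : E →ₐ[k] E') :
    RTT q (fun a c => f (T a c)) i l j m := by
  have := congrArg f h
  simpa only [RTT, Intertwines, map_add, map_smul, map_mul] using this

/-- The matrix of generators satisfies the RTT relations: the defining relations, rewritten
uniformly in the four indices. -/
theorem rtt_X (hq : q ≠ 0) (i l j m : Fin n) : RTT q (X k n q) i l j m := by
  have col : ∀ {i l j : Fin n}, i < l → X k n q i j * X k n q l j
      = q • (X k n q l j * X k n q i j) := fun h => by
    simpa [X] using RingQuot.mkAlgHom_rel k (Rel.col (k := k) (q := q) h)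
  have row : ∀ {i j m : Fin n}, j < m → X k n q i j * X k n q i m
      = q • (X k n q i m * X k n q i j) := fun h => by
    simpa [X] using RingQuot.mkAlgHom_rel k (Rel.row (k := k) (q := q) h)
  have swap : ∀ {i j l m : Fin n}, i < l → m < j → X k n q i j * X k n q l m
      = X k n q l m * X k n q i j := fun h h' => by
    simpa [X] using RingQuot.mkAlgHom_rel k (Rel.swap (k := k) (q := q) h h')
  have mixed : ∀ {i j l m : Fin n}, i < l → j < m → X k n q i j * X k n q l m
      = X k n q l m * X k n q i j + (q - q⁻¹) • (X k n q i m * X k n q l j) := fun h h' => by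
    simpa [X] using RingQuot.mkAlgHom_rel k (Rel.mixed (k := k) (q := q) h h')
  unfold RTT Intertwines
  obtain ⟨h, hn1, hn2⟩ | ⟨h, hn1, hn2⟩ | ⟨h, hn1, hn2⟩ :
      (i < l ∧ i ≠ l ∧ ¬ l < i) ∨ (i = l ∧ ¬ i < l ∧ ¬ l < i) ∨
        (l < i ∧ i ≠ l ∧ ¬ i < l) := by omega
  all_goals obtain ⟨h', hn1', hn2'⟩ | ⟨h', hn1', hn2'⟩ | ⟨h', hn1', hn2'⟩ :
      (j < m ∧ j ≠ m ∧ ¬ m < j) ∨ (j = m ∧ ¬ j < m ∧ ¬ m < j) ∨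
        (m < j ∧ j ≠ m ∧ ¬ j < m) := by omega
  all_goals simp only [h, h', hn1, hn2, hn1', hn2', lt_irrefl, if_true, if_false, zero_smul,
    one_smul, add_zero]
  · rw [mixed h h', swap h h']
  · rw [col h]
  · rw [swap h h']
  · rw [row h']
    match_scalars
    field_simp
    ring
  · rw [row h']
  · rw [swap h h']
  · rw [col h]
    match_scalars
    field_simp
    ring
  · rw [mixed h h', swap h h']

/-- Universal property of `O_q(M_n(k))`: a matrix satisfying the RTT relations for the columns
`j ≤ m` already satisfies all the defining relations. -/
theorem exists_lift {E : Type*} [Ring E] [Algebra k E] (hq : q ≠ 0) (T : Fin n → Fin n → E)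
    (h : ∀ i l j m, j ≤ m → RTT q T i l j m) :
    ∃ f : A k n q →ₐ[k] E, ∀ i j, f (X k n q i j) = T i j := by
  have swap : ∀ {i j l m : Fin n}, i < l → m < j → T i j * T l m = T l m * T i j := by
    intro i j l m h1 h2
    have := h l i m j h2.le
    simp only [RTT, Intertwines, h1, h1.ne', h2, h2.ne, if_true, if_false, one_smul] at this
    simpa using this.symm
  have key : ∀ ⦃x y⦄, Rel k n q x y →
      FreeAlgebra.lift k (fun p : Fin n × Fin n => T p.1 p.2) x
        = FreeAlgebra.lift k (fun p : Fin n × Fin n => T p.1 p.2) y := by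
    intro x y hxy
    cases hxy with
    | @col i l j h1 =>
      have := h i l j j le_rfl
      simpa [RTT, Intertwines, h1, h1.ne, h1.not_gt] using this
    | @row i j m h1 =>
      have := h i i j m h1.le
      simp only [RTT, Intertwines, lt_irrefl, h1, h1.ne, if_true, if_false, one_smul, zero_smul,
        add_zero, sub_smul] at this
      simp only [map_mul, map_smul, FreeAlgebra.lift_ι_apply]
      have h2 : T i m * T i j = q⁻¹ • (T i j * T i m) := by
        rw [eq_sub_of_add_eq this.symm, sub_sub_cancel]
      rw [h2, smul_smul, mul_inv_cancel₀ hq, one_smul]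
    | @swap i j l m h1 h2 => simpa using swap h1 h2
    | @mixed i j l m h1 h2 =>
      have := h i l j m h2.le
      simp only [RTT, Intertwines, h1.not_gt, h1.ne, h2, h2.ne, if_true, if_false, one_smul,
        zero_smul, add_zero] at this
      simp only [map_mul, map_add, map_smul, FreeAlgebra.lift_ι_apply]
      rw [this, swap h1 h2]
  refine ⟨RingQuot.liftAlgHom k ⟨FreeAlgebra.lift k (fun p : Fin n × Fin n => T p.1 p.2), key⟩,
    fun i j => ?_⟩
  simp [X]

theorem A_induction {P : A k n q → Prop} (hX : ∀ i j, P (X k n q i j)) (h1 : P 1)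
    (hs : ∀ (r : k) a, P a → P (r • a))
    (ha : ∀ a b, P a → P b → P (a + b)) (hm : ∀ a b, P a → P b → P (a * b)) (a) : P a := by
  obtain ⟨x, rfl⟩ := RingQuot.mkAlgHom_surjective k (Rel k n q) a
  induction x using FreeAlgebra.induction with
  | grade0 r => 
    rw [AlgHom.commutes, Algebra.algebraMap_eq_smul_one]
    exact hs r 1 h1
  | grade1 x => exact hX x.1 x.2
  | mul a b ha' hb' => rw [map_mul]; exact hm _ _ ha' hb'
  | add a b ha' hb' => rw [map_add]; exact ha _ _ ha' hb'

/-! ### The commutation of a generator past an arbitrary element -/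

variable (q)

/-- The value at `X_{ac}` of the `n`-dimensional representation of `O_q(M_n(k))` given by the inverse
of the R-matrix: `rho a a = diag(1, …, q⁻¹, …, 1)` with `q⁻¹` in place `a`,
`rho a c = -(q - q⁻¹) E_{ca}` for `a < c`, and `rho a c = 0` for `c < a`. -/
def rho (a c : Fin n) : Matrix (Fin n) (Fin n) k := Matrix.of fun l l' =>
  (if l = l' then if a = c then if a = l' then q⁻¹ else 1 else 0 else 0)
    - if l = c then if l' = a then if a < c then q - q⁻¹ else 0 else 0 else 0

variable {q}

theorem rho_mul (i j l m u v : Fin n) : (rho q i j * rho q l m) u v =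
    rho q i j u v * (if l = m then if l = v then q⁻¹ else 1 else 0)
      - rho q i j u m * (if v = l then if l < m then q - q⁻¹ else 0 else 0) := by
  rw [Matrix.mul_apply]
  conv_lhs => enter [2, w]; rw [rho.eq_def q l m]
  simp [mul_sub, Finset.sum_sub_distrib]

/-- The matrices `rho a c` satisfy the RTT relations; this is an instance of the Yang-Baxter
equation, verified entry by entry. -/
theorem rtt_rho (hq : q ≠ 0) (i l j m : Fin n) : RTT q (rho q) i l j m := by
  unfold RTT Intertwines
  ext u v
  simp only [Matrix.add_apply, Matrix.smul_apply, rho_mul, smul_eq_mul]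
  simp only [rho, Matrix.of_apply]
  grind


/-- The algebra homomorphism `σ : A → M_n(A)`, `σ(X_{ij}) = ∑_p rho_{ip} X_{pj}`, that is
`(rho ⊗ id) ∘ Δ`. Its entries describe how a generator passes an element from columns further left:
`X_{lm} b = ∑_p σ(b)_{lp} X_{pm}`. -/
theorem exists_sigma (hq : q ≠ 0) :
    ∃ f : A k n q →ₐ[k] Matrix (Fin n) (Fin n) (A k n q), ∀ i j l l', f (X k n q i j) l l' =
      ∑ p, rho q i p l l' • X k n q p j := by
  have hT : ∀ i l j m, RTT q (fun a c => (rho q a c : Matrix (Fin n) (Fin n) k).map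
      (algebraMap k (A k n q))) i l j m :=
    fun i l j m => (rtt_rho hq i l j m).map (Algebra.ofId k (A k n q)).mapMatrix
  have hS : ∀ i l j m, RTT q (fun a c => Matrix.scalar (Fin n) (X k n q a c)) i l j m :=
    fun i l j m => (rtt_X hq i l j m).map (Matrix.scalarAlgHom (Fin n) k)
  obtain ⟨f, hf⟩ := exists_lift hq _ fun i l j m _ =>
    RTT.mul (q := q) (T := fun a c => (rho q a c : Matrix (Fin n) (Fin n) k).map
      (algebraMap k (A k n q))) (S := fun a c => Matrix.scalar (Fin n) (X k n q a c))
      (i := i) (l := l) (j := j) (m := m)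
      (fun i j a b => by
        ext u v
        simp [Matrix.scalar_apply, Algebra.commutes])
      (fun p p' => hT _ _ _ _) (fun p p' => hS _ _ _ _)
  refine ⟨f, fun i j l l' => ?_⟩
  rw [hf]
  simp [Matrix.sum_apply, ← Algebra.smul_def]

theorem rho_sum {E : Type*} [AddCommGroup E] [Module k E] (i l l' : Fin n) (x : Fin n → E) :
    ∑ p, rho q i p l l' • x p = (if l = l' then if i = l then q⁻¹ else 1 else 0) • x i
        - (if l' = i then if i < l then q - q⁻¹ else 0 else 0) • x l := by
  simp only [rho, Matrix.of_apply, sub_smul, Finset.sum_sub_distrib, ite_smul, zero_smul]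
  simp
  grind

/-- The entries `b ↦ f(b)_{ij}` of `σ`, seen as linear operators on `A`, satisfy the RTT relations.
The set of `b` on which they do is closed under products by `Intertwines.mul`, so it suffices to
check generators, where the claim is again the Yang-Baxter equation. -/
theorem rtt_sigma (f : A k n q →ₐ[k] Matrix (Fin n) (Fin n) (A k n q))
    (hq : q ≠ 0) (hf : ∀ i j l l', f (X k n q i j) l l' = ∑ p, rho q i p l l' • X k n q p j)
    (b : A k n q) :
    ∀ i l j m, Intertwines q (fun i l j m => f (f b l m) i j) (fun i l j m => f (f b i j) l m)
      i l j m := by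
  induction b using A_induction with
  | hX a c =>
    intro i l j m
    have h : ∀ i j l m, f (f (X k n q a c) l m) i j =
        ∑ u, (∑ w, rho q a w l m • rho q w u i j) • X k n q u c := by
      intro i j l m
      simp only [hf, map_sum, map_smul, Matrix.sum_apply, Matrix.smul_apply, Finset.smul_sum,
        smul_smul, Finset.sum_smul, smul_eq_mul]
      rw [Finset.sum_comm]
    simp only [Intertwines, h, Finset.smul_sum, smul_smul, ← Finset.sum_add_distrib, ← add_smul]
    refine Finset.sum_congr rfl fun u _ => ?_
    congr 1
    simp only [rho_sum]
    simp only [rho, Matrix.of_apply, smul_eq_mul]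
    grind
  | h1 =>
    intro i l j m
    have h1 : ∀ i j l m, f ((1 : Matrix (Fin n) (Fin n) (A k n q)) i j) l m =
        (if i = j then if l = m then (1 : k) else 0 else 0) • 1 := by
      intro i j l m
      rw [Matrix.one_apply]
      split_ifs <;> simp [*]
    simp only [Intertwines, map_one, h1, smul_smul, ← add_smul]
    congr 1
    grind
  | hs r a ha =>
    intro i l j m
    have := congrArg (fun x => r • x) (ha i l j m)
    simpa [Intertwines, smul_comm r] using this
  | ha a b ha hb =>
    intro i l j m
    have h1 := ha i l j m
    have h2 := hb i l j m
    simp only [Intertwines, map_add, Matrix.add_apply, smul_add] at h1 h2 ⊢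
    rw [add_add_add_comm, h1, h2, add_add_add_comm]
  | hm a b ha hb =>
    intro i l j m
    have := Intertwines.mul (ha i l) (fun p p' => hb p p' j m)
    convert this using 1
    · ext i l j m
      simp only [map_mul, Matrix.mul_apply, map_sum, Matrix.sum_apply]
      rw [Finset.sum_comm]
    · ext i l j m
      simp only [map_mul, Matrix.mul_apply, map_sum, Matrix.sum_apply]

end RTT
end QMat

namespace QMat
/-! ### The action on `A ⊗ A` and the bijectivity of multiplication -/

section Main

variable {k : Type*} [Field k] {n : ℕ} {q : k}

/-- The operators on `E ⊗ E` that make it an `A`-module extending left multiplication: generators in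
the first `s` columns multiply the left factor, and for the other columns
`X_{lm} (a ⊗ b) = ∑_p σ(a)_{lp} ⊗ X_{pm} b`. The statement is for a general ring `E`, because
the instances on `RingQuot` block the synthesis of a ring structure on
`Module.End k (A ⊗ A)`. -/
theorem exists_rtt_end (s : ℕ) {E : Type*} [Ring E] [Algebra k E]
    (x : Fin n → Fin n → E) (hx : ∀ i l j m, RTT q x i l j m)
    (f : E →ₐ[k] Matrix (Fin n) (Fin n) E)
    (hf : ∀ i j l l', f (x i j) l l' = ∑ p, rho q i p l l' • x p j)
    (hσ : ∀ b i l j m, Intertwines q (fun i l j m => f (f b l m) i j)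
      (fun i l j m => f (f b i j) l m) i l j m) :
    ∃ T : Fin n → Fin n → Module.End k (E ⊗[k] E),
      (∀ i l j m, j ≤ m → RTT q T i l j m) ∧
      (∀ i j : Fin n, (j : ℕ) < s → ∀ a b, T i j (a ⊗ₜ b) = (x i j * a) ⊗ₜ b) ∧
      (∀ i j : Fin n, s ≤ (j : ℕ) → ∀ b, T i j (1 ⊗ₜ b) = 1 ⊗ₜ (x i j * b)) := by
  let op : Fin n → Fin n → Module.End k E := fun i j =>
    Matrix.entryLinearMap k E i j ∘ₗ f.toLinearMap
  let T₁ : Fin n → Fin n → Module.End k (E ⊗[k] E) := fun i j =>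
    Module.End.rTensorAlgHom k E E (op i j)
  let T₂ : Fin n → Fin n → Module.End k (E ⊗[k] E) := fun i j =>
    Module.End.lTensorAlgHom k E E (Algebra.lmul k E (x i j))
  let L : E →ₐ[k] Module.End k (E ⊗[k] E) :=
    (Module.End.rTensorAlgHom k E E).comp (Algebra.lmul k E)
  have hT₁ : ∀ i l j m, RTT q T₁ i l j m := by
    intro i l j m
    refine RTT.map ?_ (Module.End.rTensorAlgHom k E E)
    exact LinearMap.ext fun b => hσ b i l j m
  have hT₂ : ∀ i l j m, RTT q T₂ i l j m := fun i l j m =>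
    (RTT.map (hx i l j m) (Algebra.lmul k E)).map
      (Module.End.lTensorAlgHom k E E)
  have hL : ∀ i l j m, RTT q (fun i j => L (x i j)) i l j m := fun i l j m =>
    RTT.map (hx i l j m) L
  have aT₁ : ∀ i j a b, T₁ i j (a ⊗ₜ b) = f a i j ⊗ₜ b := fun _ _ _ _ => rfl
  have aT₂ : ∀ i j a b, T₂ i j (a ⊗ₜ b) = a ⊗ₜ (x i j * b) := fun _ _ _ _ => rfl
  have aL : ∀ c a b, L c (a ⊗ₜ b) = (c * a) ⊗ₜ b := fun _ _ _ => rfl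
  clear_value T₁ T₂ L
  have hcomm : ∀ i j a b, Commute (T₁ i j) (T₂ a b) := fun i j a b =>
    TensorProduct.ext' fun x y => by simp only [Module.End.mul_apply, aT₁, aT₂]
  have hT : ∀ i l j m, RTT q (fun i j => ∑ p, T₁ i p * T₂ p j) i l j m := fun i l j m =>
    RTT.mul hcomm (fun _ _ => hT₁ _ _ _ _) (fun _ _ => hT₂ _ _ _ _)
  -- `σ` is multiplicative, so the two kinds of operators commute past each other
  -- by the same rule as the generators themselves
  have hex : ∀ i l j m, (∑ p, T₁ l p * T₂ p m) * L (x i j) =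
      (if i = l then q⁻¹ else 1) • (L (x i j) * ∑ p, T₁ l p * T₂ p m)
        - (if i < l then q - q⁻¹ else 0) • (L (x l j) * ∑ p, T₁ i p * T₂ p m) := by
    intro i l j m
    refine TensorProduct.ext' fun a b => ?_
    have h1 : ∀ p, f (x i j * a) l p = (if i = l then q⁻¹ else 1) • (x i j * f a l p)
        - (if i < l then q - q⁻¹ else 0) • (x l j * f a i p) := by
      intro p
      simp only [map_mul, Matrix.mul_apply, hf, rho_sum, sub_mul, Finset.sum_sub_distrib]
      simp
    simp only [Module.End.mul_apply, LinearMap.sub_apply, LinearMap.smul_apply,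
      LinearMap.sum_apply, aT₁, aT₂, aL, h1, map_sum, TensorProduct.sub_tmul,
      ← TensorProduct.smul_tmul', Finset.sum_sub_distrib, Finset.smul_sum]
  refine ⟨fun i j : Fin n => if (j : ℕ) < s then L (x i j) else ∑ p, T₁ i p * T₂ p j,
    fun i l j m hjm => ?_, fun i j hj a b => ?_, fun i j hj b => ?_⟩
  · by_cases hm : (m : ℕ) < s
    · have hj : (j : ℕ) < s := lt_of_le_of_lt hjm hm
      simpa [RTT, Intertwines, hm, hj] using hL i l j m
    by_cases hj : (j : ℕ) < s
    · have hlt : j < m := by omega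
      simp only [RTT, Intertwines, hm, hj, if_true, if_false, hlt, hlt.ne, hex]
      obtain ⟨h, hn1, hn2⟩ | ⟨h, hn1, hn2⟩ | ⟨h, hn1, hn2⟩ :
          (i < l ∧ i ≠ l ∧ ¬ l < i) ∨ (i = l ∧ ¬ i < l ∧ ¬ l < i) ∨
            (l < i ∧ i ≠ l ∧ ¬ i < l) := by omega
      all_goals simp only [h, hn1, hn2, lt_irrefl, if_true, if_false]
      all_goals module
    · simpa only [RTT, Intertwines, hm, hj, if_false] using hT i l j m
  · simp only [if_pos hj]
    exact aL _ _ _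
  · simp only [if_neg (not_lt.2 hj)]
    simp [LinearMap.sum_apply, aT₁, aT₂, Matrix.one_apply, TensorProduct.ite_tmul]

/-- If `φ` is an action on `E ⊗ E` as above, then `φ(bc)(1 ⊗ 1) = b ⊗ c`. Since
`B ⊗ C → E ⊗ E` is injective over a field, so is multiplication `B ⊗ C → E`. -/
theorem injective_of_lift (s : ℕ) {E : Type*} [Ring E] [Algebra k E] (x : Fin n → Fin n → E)
    (φ : E →ₐ[k] Module.End k (E ⊗[k] E))
    (hB : ∀ i j : Fin n, (j : ℕ) < s → ∀ a b, φ (x i j) (a ⊗ₜ b) = (x i j * a) ⊗ₜ b)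
    (hC : ∀ i j : Fin n, s ≤ (j : ℕ) → ∀ b, φ (x i j) (1 ⊗ₜ b) = 1 ⊗ₜ (x i j * b))
    (B C : Subalgebra k E)
    (hB₀ : B = Algebra.adjoin k {a | ∃ i j : Fin n, (j : ℕ) < s ∧ a = x i j})
    (hC₀ : C = Algebra.adjoin k {a | ∃ i j : Fin n, s ≤ (j : ℕ) ∧ a = x i j})
    (μ : B ⊗[k] C →ₗ[k] E) (hμ : ∀ b c, μ (b ⊗ₜ c) = (b : E) * c) : Function.Injective μ := by
  have hB' : ∀ b ∈ B, ∀ x y, φ b (x ⊗ₜ y) = (b * x) ⊗ₜ y := by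
    intro b hb
    rw [hB₀] at hb
    induction hb using Algebra.adjoin_induction with
    | mem a ha => obtain ⟨i, j, hj, rfl⟩ := ha; exact hB i j hj
    | algebraMap r => intro x y; simp [Algebra.smul_def]
    | add a b _ _ ha hb => intro x y; simp [ha, hb, add_mul, TensorProduct.add_tmul]
    | mul a b _ _ ha hb => intro x y; simp [ha, hb, mul_assoc]
  have hC' : ∀ c ∈ C, ∀ y, φ c (1 ⊗ₜ y) = 1 ⊗ₜ (c * y) := by
    intro c hc
    rw [hC₀] at hc
    induction hc using Algebra.adjoin_induction with
    | mem a ha => obtain ⟨i, j, hj, rfl⟩ := ha; exact hC i j hj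
    | algebraMap r => intro y; simp [← Algebra.smul_def]
    | add a b _ _ ha hb => intro y; simp [ha, hb, add_mul, TensorProduct.tmul_add]
    | mul a b _ _ ha hb => intro y; simp [ha, hb, mul_assoc]
  have key : ∀ t, φ (μ t) (1 ⊗ₜ 1) =
      TensorProduct.map B.val.toLinearMap C.val.toLinearMap t := by
    intro t
    induction t with
    | zero => simp
    | add a b ha hb => simp [ha, hb]
    | tmul b c =>
      rw [hμ, map_mul, Module.End.mul_apply, hC' c c.2, hB' b b.2]
      simp
  intro t t' h
  apply TensorProduct.map_injective_of_flat_flat B.val.toLinearMap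
    C.val.toLinearMap Subtype.val_injective Subtype.val_injective
  rw [← key, ← key, h]

theorem mulMap_injective (hq : q ≠ 0) (s : ℕ) : Function.Injective (mulMap k n q s) := by
  obtain ⟨f, hf⟩ := exists_sigma (n := n) hq
  obtain ⟨T, hT, hB, hC⟩ := exists_rtt_end s (X k n q) (rtt_X hq) f hf (rtt_sigma f hq hf)
  obtain ⟨φ, hφ⟩ := exists_lift hq T hT
  exact injective_of_lift s (X k n q) φ (fun i j hj => by rw [hφ]; exact hB i j hj)
    (fun i j hj => by rw [hφ]; exact hC i j hj) (Bsub k n q s) (Csub k n q s) rfl rfl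
    (mulMap k n q s) fun _ _ => rfl

/-- The range `R = BC` of the multiplication map contains `1` and is a left ideal: it is a left
`B`-module, and a generator `X_{lm}` of `C` satisfies `X_{lm} b ∈ ∑_p B X_{pm}` for `b ∈ B`. -/
theorem mulMap_surjective (hq : q ≠ 0) (s : ℕ) : Function.Surjective (mulMap k n q s) := by
  set R := LinearMap.range (mulMap k n q s) with hR
  have hmem : ∀ b ∈ Bsub k n q s, ∀ c ∈ Csub k n q s, b * c ∈ R := fun b hb c hc =>
    ⟨(⟨b, hb⟩ : Bsub k n q s) ⊗ₜ (⟨c, hc⟩ : Csub k n q s), rfl⟩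
  have hXB : ∀ i j : Fin n, (j : ℕ) < s → X k n q i j ∈ Bsub k n q s := fun i j h =>
    Algebra.subset_adjoin ⟨i, j, h, rfl⟩
  have hXC : ∀ i j : Fin n, s ≤ (j : ℕ) → X k n q i j ∈ Csub k n q s := fun i j h =>
    Algebra.subset_adjoin ⟨i, j, h, rfl⟩
  have hind : ∀ {P : A k n q → Prop}, (∀ b ∈ Bsub k n q s, ∀ c ∈ Csub k n q s, P (b * c)) →
      (∀ x y, P x → P y → P (x + y)) → P 0 → ∀ x ∈ R, P x := by
    rintro P h1 h2 h3 x ⟨t, rfl⟩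
    induction t with
    | zero => simpa using h3
    | add a b ha hb => rw [map_add]; exact h2 _ _ ha hb
    | tmul b c => exact h1 b b.2 c c.2
  have hBR : ∀ b ∈ Bsub k n q s, ∀ x ∈ R, b * x ∈ R := by
    intro b hb
    refine hind (fun b' hb' c hc => ?_) (fun x y hx hy => ?_) ?_
    · rw [← mul_assoc]
      exact hmem _ (mul_mem hb hb') _ hc
    · rw [mul_add]
      exact add_mem hx hy
    · simp
  have hRC : ∀ c ∈ Csub k n q s, ∀ x ∈ R, x * c ∈ R := by
    intro c hc
    refine hind (fun b' hb' c' hc' => ?_) (fun x y hx hy => ?_) ?_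
    · rw [mul_assoc]
      exact hmem _ hb' _ (mul_mem hc' hc)
    · rw [add_mul]
      exact add_mem hx hy
    · simp
  have hCB : ∀ b ∈ Bsub k n q s, ∃ g : Fin n → Fin n → A k n q, (∀ l p, g l p ∈ Bsub k n q s) ∧
      ∀ l m : Fin n, s ≤ (m : ℕ) → X k n q l m * b = ∑ p, g l p * X k n q p m := by
    intro b hb
    induction hb using Algebra.adjoin_induction with
    | mem a ha =>
      obtain ⟨a, c, hc, rfl⟩ := ha
      refine ⟨fun l p => (if p = l then (if a = l then q else 1) • X k n q a c else 0) +
        if p = a then ((if l < a then q - q⁻¹ else 0) - (q - q⁻¹)) • X k n q l c else 0,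
        fun l p => ?_, fun l m hm => ?_⟩
      · refine add_mem ?_ ?_
        · split_ifs
          exacts [Subalgebra.smul_mem _ (hXB a c hc) _, Subalgebra.smul_mem _ (hXB a c hc) _,
            zero_mem _]
        · split_ifs
          exacts [Subalgebra.smul_mem _ (hXB l c hc) _, Subalgebra.smul_mem _ (hXB l c hc) _,
            zero_mem _]
      · have hlt : c < m := by omega
        have h := rtt_X hq a l c m
        simp only [RTT, Intertwines, hlt, hlt.ne, if_true, if_false, one_smul] at h
        rw [eq_sub_of_add_eq h.symm]
        simp only [add_mul, Finset.sum_add_distrib, ite_mul, zero_mul, Finset.sum_ite_eq',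
          Finset.mem_univ, if_true, smul_mul_assoc]
        module
    | algebraMap r =>
      refine ⟨fun l p => if p = l then algebraMap k _ r else 0, fun l p => ?_, fun l m _ => ?_⟩
      · dsimp only
        split_ifs
        exacts [algebraMap_mem _ r, zero_mem _]
      · simp [Algebra.commutes]
    | add a b _ _ ha hb =>
      obtain ⟨g, hg, hg'⟩ := ha
      obtain ⟨g', hg₂, hg₂'⟩ := hb
      refine ⟨fun l p => g l p + g' l p, fun l p => add_mem (hg l p) (hg₂ l p), fun l m hm => ?_⟩
      simp only [mul_add, hg' l m hm, hg₂' l m hm, add_mul, Finset.sum_add_distrib]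
    | mul a b _ _ ha hb =>
      obtain ⟨g, hg, hg'⟩ := ha
      obtain ⟨g', hg₂, hg₂'⟩ := hb
      refine ⟨fun l p => ∑ r, g l r * g' r p,
        fun l p => sum_mem fun r _ => mul_mem (hg l r) (hg₂ r p), fun l m hm => ?_⟩
      simp only [← mul_assoc, hg' l m hm, Finset.sum_mul]
      rw [Finset.sum_comm]
      refine Finset.sum_congr rfl fun p _ => ?_
      simp only [mul_assoc, hg₂' p m hm, Finset.mul_sum]
  have hXR : ∀ i j, ∀ x ∈ R, X k n q i j * x ∈ R := by
    intro i j
    by_cases hj : (j : ℕ) < s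
    · exact hBR _ (hXB i j hj)
    refine hind (fun b' hb' c hc => ?_) (fun x y hx hy => ?_) ?_
    · rw [← mul_assoc]
      obtain ⟨g, hg, hg'⟩ := hCB b' hb'
      rw [hg' i j (not_lt.1 hj)]
      exact hRC c hc _ (sum_mem fun p _ => hmem _ (hg i p) _ (hXC p j (not_lt.1 hj)))
    · rw [mul_add]
      exact add_mem hx hy
    · simp
  have hAR : ∀ a : A k n q, ∀ x ∈ R, a * x ∈ R := by
    intro a
    induction a using A_induction with
    | hX i j => exact hXR i j
    | h1 => simp
    | hs r a ha => intro x hx; rw [smul_mul_assoc]; exact R.smul_mem _ (ha x hx)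
    | ha a b ha hb => intro x hx; rw [add_mul]; exact add_mem (ha x hx) (hb x hx)
    | hm a b ha hb => intro x hx; rw [mul_assoc]; exact ha _ (hb x hx)
  intro a
  have h1 : (1 : A k n q) ∈ R := by simpa using hmem 1 (one_mem _) 1 (one_mem _)
  have h2 := hAR a 1 h1
  rwa [mul_one] at h2

end Main
end QMat

/-- Lemma 6.2: multiplication `B ⊗ₖ C → A` is a vector space isomorphism. -/
theorem stmt18 (k : Type*) [Field k] (n : ℕ) (hn : 0 < n) (q : k) (hq : q ≠ 0)
    (s : ℕ) (hs1 : 1 ≤ s) (hs2 : s ≤ n - 1) :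
    Function.Bijective (mulMap k n q s) := by
  exact ⟨mulMap_injective hq s, mulMap_surjective hq s⟩

end
end

section
/- Let I,J,M,N ⊆ {1,…,n} with |I| = |J| and |M| = |N|. Then in A: q^{|I∩M|} [I|J][M|N] = q^{|J∩N|} [M|N][I|J] + q^{|J∩N|} Σ_{S ∈ S_≤(I,M), T ∈ S_≥(J,N), (S,T) ≠ (I,J)} λ̃_S μ_T [S^♮|T^♮][S|T], where λ̃_S = (−q̂)^{|I∖S|} (−q)^{−L(S,I,M)} ξ_q(I∖S; S∖I) for S ∈ S_≤(I,M) (with S^♮ taken relative to (I,M)) and μ_T = q̂^{|T∖J|} (−q)^{L^♮(T,J,N)} ξ_q(T∖J; J∖T) for T ∈ S_≥(J,N) (with T^♮ taken relative to (J,N)). -/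
/-!
The proof compares two expansions in a pair of `q`-exterior algebras.

Let an algebra contain two families `e_1, …, e_n` and `f_1, …, f_n` that satisfy the relations of
the quantum exterior algebra, together with cross relations allowing every `e_a f_b` to be rewritten
in terms of `f e` (`ExtPair`). Write `e_J` and `f_N` for the increasing monomials. Moving the
factors of `e_J` one at a time past `f_N` gives an explicit straightening rule
`e_J f_N = Σ_T c_T f_{T♮} e_T` (`straighten`), whose coefficients contain the products of
`(-q)`-integers collected in `ξ_q`. The opposite algebra satisfies the same relations with `q⁻¹`
in place of `q`, which yields the reverse rule for `f_N e_J` (`straighten_rev`).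

The algebra `O_q(M_n(k))` coacts on this situation: `y_j = Σ_i e_i ⊗ X_{ij}` and
`z_j = Σ_i f_i ⊗ X_{ij}` satisfy the same relations as `e` and `f` (`ExtPair.coact`), and
`y_J = Σ_I e_I ⊗ [I|J]` (`mono_coact`). Straightening `y_J z_N` therefore gives
`Σ e_I f_M ⊗ [I|J][M|N] = Σ_T c_T Σ f_{M'} e_{I'} ⊗ [M'|T♮][I'|T]`. Rewriting `f_{M'} e_{I'}` in
the monomials `e_S f_{S♮}` and comparing coefficients of `e_I f_M` gives `prod_minors`. The
comparison is legitimate because there is a model in which the monomials `e_X f_Y` are linearly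
independent (`exists_model`).

It remains to match normalizations. The order conditions `S ≤ I` and `T ≥ J` cost nothing, because
`ξ_q` vanishes when they fail (`setLE_of_xiq_ne_zero`), and the term `(S, T) = (I, J)` has
coefficient `1` after multiplication by `q^{|I ∩ M|}`, apart from the common factor
`q^{|J ∩ N|}`.
-/

open scoped TensorProduct
open scoped Classical

noncomputable section

open QMat

/-! ### Straightening in a pair of q-exterior algebras -/

set_option linter.unusedSimpArgs false

namespace QMatAux

/-- Two families `e`, `f` of generators of `q`-exterior algebras inside one `k`-algebra, with
cross relations of FRT type. These are the relations of a braided tensor product of two copies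
of the quantum exterior algebra on which `O_q(M_n(k))` coacts. -/
structure ExtPair {k R : Type*} [Field k] [Ring R] [Algebra k R] {n : ℕ} (q : k)
    (e f : Fin n → R) : Prop where
  ee : ∀ a, e a * e a = 0
  ff : ∀ a, f a * f a = 0
  e_swap : ∀ a b, a < b → e b * e a = (-q) • (e a * e b)
  f_swap : ∀ a b, a < b → f b * f a = (-q) • (f a * f b)
  ef : ∀ a, e a * f a = q • (f a * e a)
  ef_lt : ∀ a b, a < b → e a * f b = f b * e a + (q - q⁻¹) • (f a * e b)
  ef_gt : ∀ a b, a < b → e b * f a = f a * e b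

section Straighten

variable {k R : Type*} [Field k] [Ring R] [Algebra k R] {n : ℕ}

/-- The product `e_S` of the `e a` with `a ∈ S`, in the order in which the `a` occur in the list
`L`. Working with a list allows inductions that remove the smallest index. -/
def mono (e : Fin n → R) (S : Finset (Fin n)) : List (Fin n) → R
  | [] => 1
  | a :: L => if a ∈ S then e a * mono e S L else mono e S L

/-- The number of entries of `L` that lie in `S`. -/
def cnt (S : Finset (Fin n)) : List (Fin n) → ℕ
  | [] => 0
  | a :: L => if a ∈ S then cnt S L + 1 else cnt S L

/-- The auxiliary elements `G_d`. For `d = 0` this is `e_J f_N`; in general it is a weighted sum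
of the elements obtained from `e_J f_N` by trading `d` of the factors `f_b` for `e_b`. They arise
when `e_a`, with `a` smaller than every entry of `L`, is moved past `e_J f_N`; see `e_mul_gmono`. -/
def gmono (q : k) (e f : Fin n → R) (J N : Finset (Fin n)) : List (Fin n) → ℕ → R
  | [], d => if d = 0 then 1 else 0
  | a :: L, d =>
    if a ∈ J then
      if a ∈ N then e a * (f a * gmono q e f J N L d)
      else ((-q) ^ d)⁻¹ • (e a * gmono q e f J N L d)
    else
      if a ∈ N then (-q) ^ d • (f a * gmono q e f J N L d)
        + negqInt k q d • (e a * gmono q e f J N L (d - 1))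
      else gmono q e f J N L d

/-- The coefficient of `f_{T♮} e_T` in `G_d`, computed by recursion on `L`. -/
def wt (q : k) (J N T : Finset (Fin n)) : List (Fin n) → ℕ → k
  | [], d => if d = 0 then 1 else 0
  | a :: L, d =>
    if a ∈ J then
      if a ∈ N then (if a ∈ T then q * wt q J N T L d else 0)
      else (if a ∈ T then ((-q) ^ d)⁻¹ * wt q J N T L d
        else ((-q) ^ d)⁻¹ * (q - q⁻¹) * wt q J N T L (d + 1))
    else
      if a ∈ N then (if a ∈ T then negqInt k q d * wt q J N T L (d - 1)
        else ((-q) ^ d)⁻¹ * wt q J N T L d)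
      else (if a ∈ T then 0 else wt q J N T L d)

lemma negqInt_zero (q : k) : negqInt k q 0 = 0 := by simp [negqInt]

lemma negqInt_succ (q : k) (hq : q ≠ 0) (d : ℕ) :
    negqInt k q (d + 1) = (-q) ^ d + (-q)⁻¹ * negqInt k q d := by
  have hq' : -q ≠ 0 := neg_ne_zero.mpr hq
  unfold negqInt
  rw [Finset.sum_range_succ', add_comm, Finset.mul_sum]
  congr 1
  · rw [← zpow_natCast]; congr 1; push_cast; ring
  · refine Finset.sum_congr rfl fun s _ => ?_
    rw [← zpow_neg_one, ← zpow_add₀ hq']; congr 1; push_cast; ring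

/-- The identity `(-q)^d + (q - q⁻¹) [d]_{-q} = (-q)^{-d}`. -/
lemma negqInt_mul (q : k) (hq : q ≠ 0) (d : ℕ) :
    (-q) ^ d + (q - q⁻¹) * negqInt k q d = ((-q) ^ d)⁻¹ := by
  have hq' : -q ≠ 0 := neg_ne_zero.mpr hq
  induction d with
  | zero => simp [negqInt_zero]
  | succ d ih =>
    have : (q - q⁻¹) * negqInt k q d = ((-q) ^ d)⁻¹ - (-q) ^ d := by rw [← ih]; ring
    rw [negqInt_succ q hq, mul_add, mul_left_comm, this, pow_succ]
    field_simp
    ring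

lemma negqInt_inv (q : k) (d : ℕ) : negqInt k q⁻¹ d = negqInt k q d := by
  unfold negqInt
  rw [← Finset.sum_range_reflect]
  refine Finset.sum_congr rfl fun s hs => ?_
  rw [← inv_neg, inv_zpow']
  congr 1
  have := Finset.mem_range.mp hs
  omega

variable {q : k} {e f : Fin n → R}

/-- `e_a G_d = (-q)^{-(j+d)} G_d e_a + (q - q⁻¹) f_a G_{d+1}`, where `j` is the degree of `e_J`. -/
lemma e_mul_gmono (hq : q ≠ 0) (h : ExtPair q e f) (J N : Finset (Fin n)) (a : Fin n) :
    ∀ (L : List (Fin n)) (_ : ∀ b ∈ L, a < b) (d : ℕ),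
      e a * gmono q e f J N L d =
        ((-q) ^ (cnt J L + d))⁻¹ • (gmono q e f J N L d * e a)
          + (q - q⁻¹) • (f a * gmono q e f J N L (d + 1)) := by
  have hq' : -q ≠ 0 := neg_ne_zero.mpr hq
  intro L
  induction L with
  | nil =>
    intro _ d
    rcases d with _ | d <;> simp [gmono, cnt]
  | cons b L ih =>
    intro hL d
    have hab : a < b := hL b (by simp)
    have ih' := ih fun c hc => hL c (by simp [hc])
    have e1 : ∀ x, e a * (e b * x) = (-q)⁻¹ • (e b * (e a * x)) := fun x => by
      rw [← mul_assoc, ← mul_assoc, h.e_swap a b hab]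
      simp [smul_smul, hq]
    have e2 : ∀ x, e b * (f a * x) = f a * (e b * x) := fun x => by
      rw [← mul_assoc, ← mul_assoc, h.ef_gt a b hab]
    have e3 : ∀ x, e a * (f b * x) = f b * (e a * x) + (q - q⁻¹) • (f a * (e b * x)) := fun x => by
      rw [← mul_assoc, h.ef_lt a b hab]; simp [add_mul, mul_assoc]
    have e4 : ∀ x, f b * (f a * x) = (-q) • (f a * (f b * x)) := fun x => by
      rw [← mul_assoc, h.f_swap a b hab]; simp [mul_assoc]
    have e5 : ∀ x, e b * (e b * x) = 0 := fun x => by rw [← mul_assoc, h.ee, zero_mul]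
    by_cases hJ : b ∈ J <;> by_cases hN : b ∈ N <;> simp only [gmono, cnt, hJ, hN, if_true, if_false]
    · rw [e1, e3, ih']
      simp only [mul_add, mul_smul_comm, smul_mul_assoc, mul_assoc, e2, e4, e5, smul_add, smul_smul,
        mul_zero, smul_zero, add_zero]
      congr 2
      · field_simp; ring
      · field_simp
    · rw [mul_smul_comm, e1, ih']
      simp only [mul_add, mul_smul_comm, smul_mul_assoc, mul_assoc, e2, e4, e5, smul_add, smul_smul,
        mul_zero, smul_zero, add_zero]
      congr 2 <;> field_simp <;> ring
    · rw [mul_add, mul_smul_comm, mul_smul_comm, e1, e3, ih', negqInt_succ q hq]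
      rcases d with _ | d
      · simp only [negqInt_zero, mul_add, add_mul, mul_smul_comm, smul_mul_assoc, mul_assoc, e2, e4, smul_add, smul_smul,
          mul_zero, smul_zero, add_zero, zero_smul, Nat.add_sub_cancel]
        simp
        module
      · rw [ih']
        simp only [mul_add, add_mul, mul_smul_comm, smul_mul_assoc, mul_assoc, e2, e4, smul_add, smul_smul,
          mul_zero, smul_zero, add_zero, zero_smul, Nat.add_sub_cancel]
        match_scalars <;> field_simp <;> ring
    · rw [ih']

lemma mono_congr (e : Fin n → R) {S S' : Finset (Fin n)} :
    ∀ (L : List (Fin n)) (_ : ∀ b ∈ L, (b ∈ S ↔ b ∈ S')), mono e S L = mono e S' L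
  | [], _ => rfl
  | a :: L, h => by
    simp only [mono, h a (by simp), mono_congr e L fun b hb => h b (by simp [hb])]

lemma wt_congr (q : k) (J N : Finset (Fin n)) {T T' : Finset (Fin n)} :
    ∀ (L : List (Fin n)) (_ : ∀ b ∈ L, (b ∈ T ↔ b ∈ T')) (d : ℕ),
      wt q J N T L d = wt q J N T' L d
  | [], _, d => rfl
  | a :: L, h, d => by
    simp only [wt, h a (by simp), wt_congr q J N L fun b hb => h b (by simp [hb])]

lemma mono_mul_e (h : ExtPair q e f) (S : Finset (Fin n)) (a : Fin n) :
    ∀ (L : List (Fin n)) (_ : ∀ b ∈ L, a < b),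
      mono e S L * e a = (-q) ^ cnt S L • (e a * mono e S L)
  | [], _ => by simp [mono, cnt]
  | b :: L, hL => by
    have ih := mono_mul_e h S a L fun c hc => hL c (by simp [hc])
    by_cases hb : b ∈ S <;> simp only [mono, cnt, hb, if_true, if_false]
    · rw [mul_assoc, ih, mul_smul_comm, ← mul_assoc, h.e_swap a b (hL b (by simp)), smul_mul_assoc,
        smul_smul, mul_assoc, pow_succ]
    · exact ih

lemma mono_mul_f (h : ExtPair q e f) (S : Finset (Fin n)) (a : Fin n) :
    ∀ (L : List (Fin n)) (_ : ∀ b ∈ L, a < b),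
      mono e S L * f a = f a * mono e S L
  | [], _ => by simp [mono]
  | b :: L, hL => by
    have ih := mono_mul_f h S a L fun c hc => hL c (by simp [hc])
    by_cases hb : b ∈ S <;> simp only [mono, hb, if_true, if_false]
    · rw [mul_assoc, ih, ← mul_assoc, h.ef_gt a b (hL b (by simp)), mul_assoc]
    · exact ih

lemma gmono_zero (h : ExtPair q e f) (J N : Finset (Fin n)) :
    ∀ (L : List (Fin n)) (_ : L.Pairwise (· < ·)),
      gmono q e f J N L 0 = mono e J L * mono f N L
  | [], _ => by simp [mono, gmono]
  | a :: L, hL => by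
    rw [List.pairwise_cons] at hL
    have ih := gmono_zero h J N L hL.2
    have hf := mono_mul_f h J a L hL.1
    by_cases hJ : a ∈ J <;> by_cases hN : a ∈ N <;>
      simp only [mono, gmono, hJ, hN, if_true, if_false, ih, negqInt_zero, pow_zero, inv_one,
        one_smul, zero_smul, add_zero, mul_assoc]
    · rw [← mul_assoc (mono e J L), hf, mul_assoc]
    · rw [← mul_assoc (mono e J L), hf, mul_assoc]

lemma cnt_of_wt_ne_zero (J N T : Finset (Fin n)) :
    ∀ (L : List (Fin n)) (d : ℕ), wt q J N T L d ≠ 0 → cnt T L = cnt J L + d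
  | [], d => by simp +contextual [wt, cnt]
  | a :: L, d => by
    have ih := cnt_of_wt_ne_zero J N T L
    by_cases hJ : a ∈ J <;> by_cases hN : a ∈ N <;> by_cases hT : a ∈ T <;>
      simp only [cnt, wt, hJ, hN, hT, if_true, if_false, ne_eq, not_true, false_implies] <;> intro hw
    · have := ih _ (right_ne_zero_of_mul hw); omega
    · have := ih _ (right_ne_zero_of_mul hw); omega
    · have := ih _ (right_ne_zero_of_mul hw); omega
    · rcases d with _ | d
      · simp [negqInt_zero] at hw
      · have := ih _ (right_ne_zero_of_mul hw); omega
    · have := ih _ (right_ne_zero_of_mul hw); omega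
    · exact ih _ hw

lemma mem_of_wt_ne_zero (J N T : Finset (Fin n)) :
    ∀ (L : List (Fin n)) (d : ℕ), wt q J N T L d ≠ 0 →
      ∀ a ∈ L, (a ∈ J → a ∈ N → a ∈ T) ∧ (a ∈ T → a ∈ J ∨ a ∈ N)
  | [], d => by simp
  | a :: L, d => by
    have ih := mem_of_wt_ne_zero J N T L
    by_cases hJ : a ∈ J <;> by_cases hN : a ∈ N <;> by_cases hT : a ∈ T <;>
      simp only [wt, hJ, hN, hT, if_true, if_false, ne_eq, not_true, false_implies,
        List.mem_cons, forall_eq_or_imp, true_or, or_true, implies_true, true_and, and_true] <;>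
      intro hw <;>
      first | exact ih _ (right_ne_zero_of_mul hw) | exact ih _ hw

/-- The straightened form of `G_d`. The recursion defining `wt` is read off from moving the
leading `e_a` to the right of all `f_b` by means of `e_mul_gmono`. -/
lemma gmono_eq_sum (hq : q ≠ 0) (h : ExtPair q e f) (J N : Finset (Fin n)) :
    ∀ (L : List (Fin n)) (_ : L.Pairwise (· < ·)) (d : ℕ),
      gmono q e f J N L d = ∑ T ∈ L.toFinset.powerset,
        wt q J N T L d • (mono f (snat n J N T) L * mono e T L)
  | [], _, d => by simp [gmono, wt, mono]
  | a :: L, hL, d => by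
    have hq' : -q ≠ 0 := neg_ne_zero.mpr hq
    rw [List.pairwise_cons] at hL
    have ih := gmono_eq_sum hq h J N L hL.2
    have haL : a ∉ L.toFinset := fun ha => lt_irrefl a (hL.1 a (List.mem_toFinset.mp ha))
    have key : ∀ d, e a * gmono q e f J N L d = ∑ T ∈ L.toFinset.powerset,
        (wt q J N T L d • (mono f (snat n J N T) L * (e a * mono e T L)) +
          ((q - q⁻¹) * wt q J N T L (d + 1)) •
            (f a * (mono f (snat n J N T) L * mono e T L))) := by
      intro d
      rw [e_mul_gmono hq h J N a L hL.1, ih d, ih (d + 1), Finset.sum_add_distrib]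
      congr 1
      · rw [Finset.sum_mul, Finset.smul_sum]
        refine Finset.sum_congr rfl fun T _ => ?_
        by_cases hw : wt q J N T L d = 0
        · simp [hw]
        · rw [smul_mul_assoc, mul_assoc, mono_mul_e h T a L hL.1, cnt_of_wt_ne_zero J N T L d hw,
            mul_smul_comm, smul_comm _ (wt q J N T L d), inv_smul_smul₀ (pow_ne_zero _ hq')]
      · rw [Finset.mul_sum, Finset.smul_sum]
        refine Finset.sum_congr rfl fun T _ => ?_
        rw [mul_smul_comm, smul_smul]
    have fkey : ∀ d, f a * gmono q e f J N L d = ∑ T ∈ L.toFinset.powerset,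
        wt q J N T L d • (f a * (mono f (snat n J N T) L * mono e T L)) := by
      intro d
      rw [ih d, Finset.mul_sum]
      exact Finset.sum_congr rfl fun T _ => mul_smul_comm _ _ _
    have ff : ∀ x, f a * (f a * x) = 0 := fun x => by rw [← mul_assoc, h.ff, zero_mul]
    have hins : ∀ T ∈ L.toFinset.powerset, ∀ d,
        a ∉ T ∧ wt q J N (insert a T) L d = wt q J N T L d ∧
        mono f (snat n J N (insert a T)) L = mono f (snat n J N T) L ∧
        mono e (insert a T) L = mono e T L := by
      intro T hT d
      have hb : ∀ b ∈ L, (b ∈ insert a T ↔ b ∈ T) := fun b hb => by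
        have : b ≠ a := (hL.1 b hb).ne'
        simp [this]
      refine ⟨fun ha => haL (Finset.mem_powerset.mp hT ha), wt_congr q J N L hb d,
        mono_congr f L fun b hbL => ?_, mono_congr e L hb⟩
      simp only [snat, Finset.mem_union, Finset.mem_inter, Finset.mem_sdiff, hb b hbL]
    rw [List.toFinset_cons, Finset.sum_powerset_insert haL, ← Finset.sum_add_distrib]
    by_cases hJ : a ∈ J <;> by_cases hN : a ∈ N
    · simp only [gmono, hJ, hN, if_true]
      rw [← mul_assoc, h.ef, smul_mul_assoc, mul_assoc, key, Finset.mul_sum, Finset.smul_sum]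
      refine Finset.sum_congr rfl fun T hT => ?_
      obtain ⟨haT, h1, h2, h3⟩ := hins T hT d
      simp only [mono, wt, snat, hJ, hN, haT, if_true, if_false, Finset.mem_union,
        Finset.mem_inter, Finset.mem_sdiff, Finset.mem_insert_self, h1, h3]
      simp only [snat] at h2
      simp [h2, mul_add, mul_assoc, ff, smul_smul]
    · simp only [gmono, hJ, hN, if_true, if_false]
      rw [key, Finset.smul_sum]
      refine Finset.sum_congr rfl fun T hT => ?_
      obtain ⟨haT, h1, h2, h3⟩ := hins T hT d
      simp only [mono, wt, snat, hJ, hN, haT, if_true, if_false, Finset.mem_union,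
        Finset.mem_inter, Finset.mem_sdiff, Finset.mem_insert_self, h1, h3]
      simp only [snat] at h2
      simp [h2, mul_assoc, smul_smul, add_comm]
    · simp only [gmono, hJ, hN, if_true, if_false]
      rw [fkey, Finset.smul_sum]
      rcases d with _ | d
      · rw [negqInt_zero, zero_smul, add_zero]
        refine Finset.sum_congr rfl fun T hT => ?_
        obtain ⟨haT, h1, h2, h3⟩ := hins T hT 0
        simp only [mono, wt, snat, hJ, hN, haT, if_true, if_false, Finset.mem_union,
          Finset.mem_inter, Finset.mem_sdiff, Finset.mem_insert_self, h1, h3]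
        simp [negqInt_zero, mul_assoc]
      · rw [Nat.add_sub_cancel, key, Finset.smul_sum, ← Finset.sum_add_distrib]
        refine Finset.sum_congr rfl fun T hT => ?_
        obtain ⟨haT, h1, h2, h3⟩ := hins T hT d
        simp only [mono, wt, snat, hJ, hN, haT, if_true, if_false, Finset.mem_union,
          Finset.mem_inter, Finset.mem_sdiff, Finset.mem_insert_self, h1, h3]
        simp only [snat] at h2
        simp only [or_true, true_and, not_false_eq_true, not_true, and_false, and_true, or_false, h1, h2,
          mul_assoc, smul_smul, smul_add, Nat.add_sub_cancel, if_true, if_false, ← negqInt_mul q hq]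
        module
    · simp only [gmono, hJ, hN, if_true, if_false]
      rw [ih]
      refine Finset.sum_congr rfl fun T hT => ?_
      obtain ⟨haT, h1, h2, h3⟩ := hins T hT d
      simp only [mono, wt, snat, hJ, hN, haT, if_true, if_false, Finset.mem_union,
        Finset.mem_inter, Finset.mem_sdiff, Finset.mem_insert_self, h1, h3]
      simp

end Straighten
end QMatAux

/-! ### Closed form of the straightening coefficients -/

namespace QMatAux

section Closed

variable {k : Type*} [Field k] {n : ℕ} {q : k}

/-- The statistic `ℓ(P; Q)` restricted to the entries of an increasing list. -/
def ellL (P Q : Finset (Fin n)) : List (Fin n) → ℕ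
  | [] => 0
  | a :: L => if a ∈ Q then cnt P L + ellL P Q L else ellL P Q L

/-- The product `ξ_q(A; B)` computed by scanning an increasing list with a counter `d`, which
goes up at the elements of `B` and down at those of `A`. -/
def xiL (q : k) (A B : Finset (Fin n)) : List (Fin n) → ℕ → k
  | [], _ => 1
  | a :: L, d =>
    if a ∈ A then negqInt k q d * xiL q A B L (d - 1)
    else if a ∈ B then xiL q A B L (d + 1) else xiL q A B L d

/-- The recursion for `wt` solved in closed form. The condition on `d` is the balance of
degrees, without which the coefficient vanishes. -/
lemma wt_eq (hq : q ≠ 0) (J N T : Finset (Fin n)) (h1 : J ∩ N ⊆ T) (h2 : T ⊆ J ∪ N) :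
    ∀ (L : List (Fin n)) (d : ℕ), cnt T L = cnt J L + d →
      wt q J N T L d = q ^ cnt (J ∩ N) L * (q - q⁻¹) ^ cnt (J \ T) L *
        (-q) ^ ((ellL ((snat n J N T \ T) ∪ (J \ N)) (T \ J) L : ℤ)
          - ellL ((snat n J N T \ T) ∪ (J \ N)) (J \ T) L
          - d * cnt ((snat n J N T \ T) ∪ (J \ N)) L) * xiL q (T \ J) (J \ T) L d
  | [], d, hd => by
    have : d = 0 := by simpa [cnt] using hd.symm
    subst this
    simp [wt, cnt, ellL, xiL]
  | a :: L, d, hd => by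
    have hq' : -q ≠ 0 := neg_ne_zero.mpr hq
    have ih := wt_eq hq J N T h1 h2 L
    have hp : ∀ m : ℕ, ((-q) ^ m)⁻¹ = (-q) ^ (-(m : ℤ)) := fun m => by
      rw [zpow_neg, zpow_natCast]
    by_cases hJ : a ∈ J <;> by_cases hN : a ∈ N <;> by_cases hT : a ∈ T
    · simp only [cnt, hJ, hT, if_true] at hd
      simp only [wt, cnt, ellL, xiL, snat, Finset.mem_union, Finset.mem_inter, Finset.mem_sdiff,
        hJ, hN, hT, if_true, if_false, not_true, not_false_eq_true, and_true, and_false, or_true,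
        true_or, or_false, true_and, false_and, false_or]
      rw [ih d (by omega)]
      simp only [snat]
      ring
    · exact absurd (h1 (Finset.mem_inter.mpr ⟨hJ, hN⟩)) hT
    · simp only [cnt, hJ, hT, if_true] at hd
      simp only [wt, cnt, ellL, xiL, snat, Finset.mem_union, Finset.mem_inter, Finset.mem_sdiff,
        hJ, hN, hT, if_true, if_false, not_true, not_false_eq_true, and_true, and_false, or_true,
        true_or, or_false, true_and, false_and, false_or]
      rw [ih d (by omega), hp]
      simp only [snat]
      push_cast
      rw [show ∀ x y z w : ℤ, x - y - z * (w + 1) = -z + (x - y - z * w) by intros; ring,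
        zpow_add₀ hq' (-(d : ℤ))]
      ring
    · simp only [cnt, hJ, hT, if_true, if_false] at hd
      simp only [wt, cnt, ellL, xiL, snat, Finset.mem_union, Finset.mem_inter, Finset.mem_sdiff,
        hJ, hN, hT, if_true, if_false, not_true, not_false_eq_true, and_true, and_false, or_true,
        true_or, or_false, true_and, false_and, false_or]
      rw [ih (d + 1) (by omega), hp]
      simp only [snat]
      push_cast
      rw [show ∀ x y z w : ℤ, x - (w + y) - z * (w + 1) = -z + (x - y - (z + 1) * w) by
        intros; ring, zpow_add₀ hq' (-(d : ℤ))]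
      ring
    · simp only [cnt, hJ, hT, if_true, if_false] at hd
      simp only [wt, cnt, ellL, xiL, snat, Finset.mem_union, Finset.mem_inter, Finset.mem_sdiff,
        hJ, hN, hT, if_true, if_false, not_true, not_false_eq_true, and_true, and_false, or_true,
        true_or, or_false, true_and, false_and, false_or]
      rcases d with _ | d
      · simp [negqInt_zero]
      · rw [Nat.add_sub_cancel, ih d (by omega)]
        simp only [snat]
        push_cast
        rw [show ∀ x y z w : ℤ, w + x - y - (z + 1) * w = x - y - z * w by intros; ring]
        ring
    · simp only [cnt, hJ, hT, if_true, if_false] at hd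
      simp only [wt, cnt, ellL, xiL, snat, Finset.mem_union, Finset.mem_inter, Finset.mem_sdiff,
        hJ, hN, hT, if_true, if_false, not_true, not_false_eq_true, and_true, and_false, or_true,
        true_or, or_false, true_and, false_and, false_or]
      rw [ih d (by omega), hp]
      simp only [snat]
      push_cast
      rw [show ∀ x y z w : ℤ, x - y - z * (w + 1) = -z + (x - y - z * w) by intros; ring,
        zpow_add₀ hq' (-(d : ℤ))]
      ring
    · exact absurd (h2 hT) (by simp [hJ, hN])
    · simp only [cnt, hJ, hT, if_true, if_false] at hd
      simp only [wt, cnt, ellL, xiL, snat, Finset.mem_union, Finset.mem_inter, Finset.mem_sdiff,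
        hJ, hN, hT, if_true, if_false, not_true, not_false_eq_true, and_true, and_false, or_true,
        true_or, or_false, true_and, false_and, false_or]
      rw [ih d (by omega)]
      simp only [snat]

lemma cnt_eq_card (S : Finset (Fin n)) :
    ∀ (L : List (Fin n)) (_ : L.Nodup), cnt S L = (L.toFinset.filter (· ∈ S)).card
  | [], _ => by simp [cnt]
  | a :: L, hL => by
    rw [List.nodup_cons] at hL
    have ih := cnt_eq_card S L hL.2
    by_cases ha : a ∈ S <;>
      simp [cnt, ha, ih, Finset.filter_insert, hL.1]

lemma cnt_finRange (S : Finset (Fin n)) : cnt S (List.finRange n) = S.card := by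
  rw [cnt_eq_card S _ (List.nodup_finRange n)]
  congr 1
  ext x
  simp

lemma ellL_eq (P Q : Finset (Fin n)) :
    ∀ (L : List (Fin n)) (_ : L.Pairwise (· < ·)),
      ellL P Q L = ∑ y ∈ L.toFinset,
        if y ∈ Q then (L.toFinset.filter fun x => x ∈ P ∧ y < x).card else 0
  | [], _ => by simp [ellL]
  | a :: L, hL => by
    have hnd : L.Nodup := (List.pairwise_cons.mp hL).2.imp ne_of_lt
    rw [List.pairwise_cons] at hL
    have ih := ellL_eq P Q L hL.2
    have haL : a ∉ L.toFinset := fun ha => lt_irrefl a (hL.1 a (List.mem_toFinset.mp ha))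
    rw [List.toFinset_cons, Finset.sum_insert haL]
    have e1 : ((insert a L.toFinset).filter fun x => x ∈ P ∧ a < x)
        = L.toFinset.filter (· ∈ P) := by
      rw [Finset.filter_insert, if_neg (by simp)]
      refine Finset.filter_congr fun x hx => ?_
      simp [hL.1 x (List.mem_toFinset.mp hx)]
    have e2 : ∑ y ∈ L.toFinset,
        (if y ∈ Q then ((insert a L.toFinset).filter fun x => x ∈ P ∧ y < x).card else 0)
        = ellL P Q L := by
      rw [ih]
      refine Finset.sum_congr rfl fun y hy => ?_
      have : ¬ y < a := (hL.1 y (List.mem_toFinset.mp hy)).not_gt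
      rw [Finset.filter_insert, if_neg (show ¬ (a ∈ P ∧ y < a) by simp [this])]
    rw [e1, e2, ← cnt_eq_card P L hnd]
    by_cases ha : a ∈ Q <;> simp [ellL, ha]

lemma ellL_finRange (P Q : Finset (Fin n)) : ellL P Q (List.finRange n) = ell n P Q := by
  rw [ellL_eq P Q _ (List.pairwise_lt_finRange n), ell, Finset.card_filter, Finset.sum_product_right,
    ← Finset.sum_filter]
  refine Finset.sum_congr (by ext; simp) fun y _ => ?_
  rw [← Finset.card_filter]
  congr 1
  ext x
  simp

lemma xiL_eq (A B : Finset (Fin n)) (hAB : Disjoint A B) :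
    ∀ (L : List (Fin n)) (_ : L.Pairwise (· < ·)) (d : ℕ),
      xiL q A B L d = ∏ r ∈ L.toFinset,
        if r ∈ A then negqInt k q (d + (L.toFinset.filter fun x => x ∈ B ∧ x ≤ r).card
          - (L.toFinset.filter fun x => x ∈ A ∧ x < r).card) else 1
  | [], _, d => by simp [xiL]
  | a :: L, hL, d => by
    rw [List.pairwise_cons] at hL
    have ih := xiL_eq A B hAB L hL.2
    have haL : a ∉ L.toFinset := fun ha => lt_irrefl a (hL.1 a (List.mem_toFinset.mp ha))
    rw [List.toFinset_cons, Finset.prod_insert haL]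
    by_cases haA : a ∈ A
    · have haB : a ∉ B := Finset.disjoint_left.mp hAB haA
      have z1 : ((insert a L.toFinset).filter fun x => x ∈ B ∧ x ≤ a) = ∅ := by
        refine Finset.filter_eq_empty_iff.mpr fun x hx => ?_
        rcases Finset.mem_insert.mp hx with rfl | hx
        · simp [haB]
        · simp [hL.1 x (List.mem_toFinset.mp hx)]
      have z2 : ((insert a L.toFinset).filter fun x => x ∈ A ∧ x < a) = ∅ := by
        refine Finset.filter_eq_empty_iff.mpr fun x hx => ?_
        rcases Finset.mem_insert.mp hx with rfl | hx
        · simp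
        · simp [(hL.1 x (List.mem_toFinset.mp hx)).le]
      rw [z1, z2]
      simp only [xiL, haA, if_true, Finset.card_empty, add_zero, Nat.sub_zero]
      rcases d with _ | d
      · simp [negqInt_zero]
      · congr 1
        rw [ih]
        refine Finset.prod_congr rfl fun r hr => ?_
        have har := hL.1 r (List.mem_toFinset.mp hr)
        rw [Finset.filter_insert, if_neg (show ¬ (a ∈ B ∧ a ≤ r) by simp [haB]),
          Finset.filter_insert, if_pos (show a ∈ A ∧ a < r from ⟨haA, har⟩),
          Finset.card_insert_of_notMem fun ha => haL (Finset.mem_filter.mp ha).1]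
        congr 2
        omega
    · by_cases haB : a ∈ B
      · simp only [xiL, haA, haB, if_true, if_false, one_mul]
        rw [ih]
        refine Finset.prod_congr rfl fun r hr => ?_
        have har := hL.1 r (List.mem_toFinset.mp hr)
        rw [Finset.filter_insert, if_pos (show a ∈ B ∧ a ≤ r from ⟨haB, har.le⟩),
          Finset.filter_insert, if_neg (show ¬ (a ∈ A ∧ a < r) by simp [haA]),
          Finset.card_insert_of_notMem fun ha => haL (Finset.mem_filter.mp ha).1]
        congr 2
        omega
      · simp only [xiL, haA, haB, if_false, one_mul]
        rw [ih]
        refine Finset.prod_congr rfl fun r hr => ?_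
        rw [Finset.filter_insert, if_neg (show ¬ (a ∈ B ∧ a ≤ r) by simp [haB]),
          Finset.filter_insert, if_neg (show ¬ (a ∈ A ∧ a < r) by simp [haA])]

lemma card_filter_lt_orderEmb (A : Finset (Fin n)) {t : ℕ} (h : A.card = t) (l : Fin t) :
    (A.filter (· < A.orderEmbOfFin h l)).card = l := by
  have : A.filter (· < A.orderEmbOfFin h l)
      = (Finset.univ.filter (· < l)).map (A.orderEmbOfFin h).toEmbedding := by
    ext x
    simp only [Finset.mem_filter, Finset.mem_map, Finset.mem_univ, true_and]
    constructor
    · rintro ⟨hx, hlt⟩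
      have : x ∈ Set.range (A.orderEmbOfFin h) := by simpa using hx
      obtain ⟨y, rfl⟩ := this
      exact ⟨y, by simpa using hlt, rfl⟩
    · rintro ⟨y, hy, rfl⟩
      exact ⟨Finset.orderEmbOfFin_mem _ _ _, (A.orderEmbOfFin h).strictMono hy⟩
  rw [this, Finset.card_map, Finset.filter_gt_eq_Iio, Fin.card_Iio]

/-- `ξ_q(A; B)` as a product over the elements of `A`: the factor at the `l`-th element `r`
uses that `l - 1` elements of `A` are smaller than `r`. -/
lemma xiq_eq_prod (A B : Finset (Fin n)) (hc : A.card = B.card) :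
    xiq k n q A B = ∏ r ∈ A, negqInt k q ((B.filter (· ≤ r)).card - (A.filter (· < r)).card) := by
  rw [xiq, dif_pos hc,
    ← Finset.prod_coe_sort A fun r =>
      negqInt k q ((B.filter (· ≤ r)).card - (A.filter (· < r)).card)]
  refine Fintype.prod_equiv (A.orderIsoOfFin rfl).toEquiv _ _ fun l => ?_
  have := card_filter_lt_orderEmb A rfl l
  rw [← Finset.coe_orderIsoOfFin_apply] at this
  simp only [RelIso.coe_fn_toEquiv, this]

lemma xiL_finRange (A B : Finset (Fin n)) (hAB : Disjoint A B) (hc : A.card = B.card) :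
    xiL q A B (List.finRange n) 0 = xiq k n q A B := by
  rw [xiL_eq A B hAB _ (List.pairwise_lt_finRange n), xiq_eq_prod A B hc, ← Finset.prod_filter]
  refine Finset.prod_congr (by ext; simp) fun r _ => ?_
  rw [zero_add]
  congr 3 <;> (ext; simp)

/-- The sets `S` with `X ∩ Y ⊆ S ⊆ X ∪ Y` and `|S| = |X|`, without an order condition. -/
def mid (X Y : Finset (Fin n)) : Finset (Finset (Fin n)) :=
  (X ∪ Y).powerset.filter fun S => X ∩ Y ⊆ S ∧ S.card = X.card

/-- The order conditions in `S_≤` and `S_≥` are automatic: if they fail, some `d_l` is `0` and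
`ξ_q` vanishes. -/
lemma setLE_of_xiq_ne_zero (J T : Finset (Fin n)) (hc : T.card = J.card)
    (hx : xiq k n q (T \ J) (J \ T) ≠ 0) : setLE n J T := by
  have hc' : (T \ J).card = (J \ T).card := by
    have h1 := Finset.card_sdiff_add_card_inter T J
    have h2 := Finset.card_sdiff_add_card_inter J T
    rw [Finset.inter_comm] at h2
    omega
  rw [xiq_eq_prod _ _ hc', Finset.prod_ne_zero_iff] at hx
  have hr : ∀ r ∈ T \ J, ((T \ J).filter (· < r)).card < ((J \ T).filter (· ≤ r)).card := by
    intro r hrr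
    by_contra hlt
    refine hx r hrr ?_
    rw [Nat.sub_eq_zero_of_le (not_lt.mp hlt), negqInt_zero]
  have hle : ∀ x, ((T \ J).filter (· ≤ x)).card ≤ ((J \ T).filter (· ≤ x)).card := by
    intro x
    rcases ((T \ J).filter (· ≤ x)).eq_empty_or_nonempty with h | h
    · simp [h]
    · set r := ((T \ J).filter (· ≤ x)).max' h with hrdef
      have hrm : r ∈ (T \ J).filter (· ≤ x) := Finset.max'_mem _ h
      have hrm' := Finset.mem_filter.mp hrm
      have e : (T \ J).filter (· ≤ x) = insert r ((T \ J).filter (· < r)) := by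
        ext y
        simp only [Finset.mem_insert, Finset.mem_filter]
        constructor
        · intro hy
          have : y ≤ r := Finset.le_max' _ _ (Finset.mem_filter.mpr hy)
          rcases this.eq_or_lt with h | h
          · exact Or.inl h
          · exact Or.inr ⟨hy.1, h⟩
        · rintro (rfl | hy)
          · exact hrm'
          · exact ⟨hy.1, hy.2.le.trans hrm'.2⟩
      rw [e, Finset.card_insert_of_notMem (by simp)]
      refine (hr r hrm'.1).trans_le (Finset.card_le_card fun y hy => ?_)
      rw [Finset.mem_filter] at hy ⊢
      exact ⟨hy.1, hy.2.trans hrm'.2⟩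
  refine ⟨hc.symm, fun h l => ?_⟩
  by_contra hlt
  rw [not_le] at hlt
  have hl1 := card_filter_lt_orderEmb J rfl l
  have hl2 := card_filter_lt_orderEmb T h.symm l
  simp only [Finset.coe_orderIsoOfFin_apply] at hlt
  set t := T.orderEmbOfFin h.symm l with ht
  set j := J.orderEmbOfFin rfl l with hj
  have htm : t ∈ T := Finset.orderEmbOfFin_mem _ _ _
  have a1 : (T.filter (· ≤ t)).card = l + 1 := by
    have : T.filter (· ≤ t) = insert t (T.filter (· < t)) := by
      ext y
      simp only [Finset.mem_insert, Finset.mem_filter, le_iff_eq_or_lt]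
      constructor
      · tauto
      · rintro (rfl | h) <;> tauto
    rw [this, Finset.card_insert_of_notMem (by simp), hl2]
  have a2 : (J.filter (· ≤ t)).card ≤ l := by
    rw [← hl1]
    refine Finset.card_le_card fun y hy => ?_
    rw [Finset.mem_filter] at hy ⊢
    exact ⟨hy.1, hy.2.trans_lt hlt⟩
  have a3 := hle t
  have b1 : (T.filter (· ≤ t)).card = ((T \ J).filter (· ≤ t)).card
      + ((T ∩ J).filter (· ≤ t)).card := by
    rw [← Finset.card_union_of_disjoint, ← Finset.filter_union, Finset.sdiff_union_inter]
    exact Finset.disjoint_filter_filter (Finset.disjoint_sdiff_inter T J)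
  have b2 : (J.filter (· ≤ t)).card = ((J \ T).filter (· ≤ t)).card
      + ((T ∩ J).filter (· ≤ t)).card := by
    rw [Finset.inter_comm, ← Finset.card_union_of_disjoint, ← Finset.filter_union,
      Finset.sdiff_union_inter]
    exact Finset.disjoint_filter_filter (Finset.disjoint_sdiff_inter J T)
  omega

end Closed
end QMatAux

/-! ### The straightening relation and its mirror image -/

namespace QMatAux

section Straighten

variable {k R : Type*} [Field k] [Ring R] [Algebra k R] {n : ℕ} {q : k} {e f : Fin n → R}

/-- The coefficient of `f_{T♮} e_T` in the straightened form of `e_J f_N`. -/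
def coef (q : k) (J N T : Finset (Fin n)) : k :=
  q ^ (J ∩ N).card * ((q - q⁻¹) ^ (T \ J).card * (-q) ^ Lnat n T J N * xiq k n q (T \ J) (J \ T))

lemma mem_mid {X Y S : Finset (Fin n)} :
    S ∈ mid X Y ↔ X ∩ Y ⊆ S ∧ S ⊆ X ∪ Y ∧ S.card = X.card := by
  simp only [mid, Finset.mem_filter, Finset.mem_powerset]; tauto

lemma card_sdiff_comm' {T J : Finset (Fin n)} (hc : T.card = J.card) :
    (T \ J).card = (J \ T).card := by
  have h1 := Finset.card_sdiff_add_card_inter T J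
  have h2 := Finset.card_sdiff_add_card_inter J T
  rw [Finset.inter_comm] at h2
  omega

lemma wt_finRange (hq : q ≠ 0) (J N T : Finset (Fin n)) (hT : T ∈ mid J N) :
    wt q J N T (List.finRange n) 0 = coef q J N T := by
  obtain ⟨h1, h2, hc⟩ := mem_mid.mp hT
  rw [wt_eq hq J N T h1 h2 _ _ (by simp [cnt_finRange, hc])]
  simp only [cnt_finRange, ellL_finRange, CharP.cast_eq_zero, zero_mul, sub_zero]
  rw [xiL_finRange _ _ disjoint_sdiff_sdiff (card_sdiff_comm' hc), coef, Lnat,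
    card_sdiff_comm' hc]
  ring

/-- The expansion of `e_J f_N` in the elements `f_{T♮} e_T`. -/
theorem straighten (hq : q ≠ 0) (h : ExtPair q e f) (J N : Finset (Fin n)) :
    mono e J (List.finRange n) * mono f N (List.finRange n) =
      ∑ T ∈ mid J N, coef q J N T •
        (mono f (snat n J N T) (List.finRange n) * mono e T (List.finRange n)) := by
  rw [← gmono_zero h J N _ (List.pairwise_lt_finRange n),
    gmono_eq_sum hq h J N _ (List.pairwise_lt_finRange n)]
  have hs : mid J N ⊆ (List.finRange n).toFinset.powerset := fun T _ => by
    rw [Finset.mem_powerset]; intro x _; simp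
  rw [← Finset.sum_subset hs]
  · exact Finset.sum_congr rfl fun T hT => by rw [wt_finRange hq J N T hT]
  · intro T _ hT
    suffices wt q J N T (List.finRange n) 0 = 0 by rw [this, zero_smul]
    by_contra hw
    have h1 := cnt_of_wt_ne_zero J N T _ _ hw
    have h2 := mem_of_wt_ne_zero J N T _ _ hw
    refine hT (mem_mid.mpr ⟨fun x hx => ?_, fun x hx => ?_, ?_⟩)
    · exact (h2 x (List.mem_finRange x)).1 (Finset.mem_inter.mp hx).1 (Finset.mem_inter.mp hx).2
    · exact Finset.mem_union.mpr ((h2 x (List.mem_finRange x)).2 hx)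
    · simpa [cnt_finRange] using h1

lemma card_snat {J N T : Finset (Fin n)} (hT : T ∈ mid J N) : (snat n J N T).card = N.card := by
  obtain ⟨h1, h2, hc⟩ := mem_mid.mp hT
  have hd : Disjoint (J ∩ N) ((J ∪ N) \ T) :=
    Finset.disjoint_left.mpr fun x hx hx' => (Finset.mem_sdiff.mp hx').2 (h1 hx)
  rw [snat, Finset.card_union_of_disjoint hd, Finset.card_sdiff_of_subset h2, hc]
  have := Finset.card_union_add_card_inter J N
  have := Finset.card_le_card h2
  omega

open MulOpposite in
/-- The defining relations are preserved by passing to the opposite algebra and to `q⁻¹`. -/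
lemma ExtPair.op (hq : q ≠ 0) (h : ExtPair q e f) :
    ExtPair (R := Rᵐᵒᵖ) q⁻¹ (fun a => op (e a)) (fun a => op (f a)) where
  ee a := by rw [← op_mul, h.ee, op_zero]
  ff a := by rw [← op_mul, h.ff, op_zero]
  e_swap a b hab := by
    rw [← op_mul, ← op_mul, h.e_swap a b hab, op_smul, smul_smul]
    simp [hq]
  f_swap a b hab := by
    rw [← op_mul, ← op_mul, h.f_swap a b hab, op_smul, smul_smul]
    simp [hq]
  ef a := by
    rw [← op_mul, ← op_mul, h.ef, op_smul, smul_smul]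
    simp [hq]
  ef_lt a b hab := by
    simp only [← op_mul, ← op_smul, ← op_add]
    rw [h.ef_gt a b hab, h.ef_lt a b hab, inv_inv]
    congr 1
    module
  ef_gt a b hab := by
    rw [← op_mul, ← op_mul, h.ef_gt a b hab]

open MulOpposite in
/-- A monomial read backwards, as in the opposite algebra, is reordered at the cost of a power of
`-q` that depends on its length only. -/
lemma mono_op (e : Fin n → R) (he : ∀ a b, a < b → e b * e a = (-q) • (e a * e b))
    (S : Finset (Fin n)) :
    ∀ (L : List (Fin n)) (_ : L.Pairwise (· < ·)),
      mono (fun a => op (e a)) S L = (-q) ^ (cnt S L).choose 2 • op (mono e S L)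
  | [], _ => by simp [mono, cnt]
  | a :: L, hL => by
    rw [List.pairwise_cons] at hL
    have ih := mono_op e he S L hL.2
    have hm : ∀ (L' : List (Fin n)), (∀ b ∈ L', a < b) →
        mono e S L' * e a = (-q) ^ cnt S L' • (e a * mono e S L') := by
      intro L'
      induction L' with
      | nil => intro _; simp [mono, cnt]
      | cons b L' ih =>
        intro hb
        have ih := ih fun c hc => hb c (by simp [hc])
        by_cases hbS : b ∈ S <;> simp only [mono, cnt, hbS, if_true, if_false]
        · rw [mul_assoc, ih, mul_smul_comm, ← mul_assoc, he a b (hb b (by simp)), smul_mul_assoc,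
            smul_smul, mul_assoc, pow_succ]
        · exact ih
    by_cases ha : a ∈ S <;> simp only [mono, cnt, ha, if_true, if_false]
    · rw [ih, mul_smul_comm, ← op_mul, hm L hL.1, op_smul, smul_smul, ← pow_add,
        Nat.choose_succ_succ' _ 1, Nat.choose_one_right, add_comm]
    · exact ih

open MulOpposite in
/-- The expansion of `f_N e_J` in the elements `e_T f_{T♮}`, from `straighten` and `ExtPair.op`. -/
theorem straighten_rev (hq : q ≠ 0) (h : ExtPair q e f) (J N : Finset (Fin n)) :
    mono f N (List.finRange n) * mono e J (List.finRange n) =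
      ∑ T ∈ mid J N, coef q⁻¹ J N T •
        (mono e T (List.finRange n) * mono f (snat n J N T) (List.finRange n)) := by
  have hq' : -q ≠ 0 := neg_ne_zero.mpr hq
  have key := straighten (inv_ne_zero hq) (h.op hq) J N
  have hL := List.pairwise_lt_finRange n
  simp only [mono_op e h.e_swap _ _ hL, mono_op f h.f_swap _ _ hL, cnt_finRange,
    smul_mul_assoc, mul_smul_comm, ← op_mul] at key
  have e1 : ∀ T ∈ mid J N, coef q⁻¹ J N T • (-q) ^ T.card.choose 2 •
      (-q) ^ (snat n J N T).card.choose 2 •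
        op (mono e T (List.finRange n) * mono f (snat n J N T) (List.finRange n)) =
      (-q) ^ N.card.choose 2 • (-q) ^ J.card.choose 2 • coef q⁻¹ J N T •
        op (mono e T (List.finRange n) * mono f (snat n J N T) (List.finRange n)) := by
    intro T hT
    rw [card_snat hT, (mem_mid.mp hT).2.2]
    simp only [smul_smul]
    congr 1
    ring
  rw [Finset.sum_congr rfl e1, ← Finset.smul_sum, ← Finset.smul_sum] at key
  have key2 := smul_right_injective _ (pow_ne_zero _ hq') (smul_right_injective _ (pow_ne_zero _ hq') key)
  apply op_injective
  rw [key2, Finset.op_sum]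
  rfl

end Straighten

end QMatAux

/-! ### A model separating the monomials -/

namespace QMatAux
section Model

universe u

variable {k : Type u} [Field k] {n : ℕ} {q : k}

/-- Left multiplication by `e_a` in the basis `1, e_a, f_a, f_a e_a`, where `a` is a new smallest
index. -/
def matE (B : Type u) [Ring B] [Algebra k B] (q : k) : Matrix (Fin 4) (Fin 4) B :=
  !![0, 0, 0, 0; 1, 0, 0, 0; 0, 0, 0, 0; 0, 0, q • 1, 0]

/-- Left multiplication by `f_a` in the basis `1, e_a, f_a, f_a e_a`. -/
def matF (B : Type u) [Ring B] : Matrix (Fin 4) (Fin 4) B :=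
  !![0, 0, 0, 0; 0, 0, 0, 0; 1, 0, 0, 0; 0, 1, 0, 0]

/-- Left multiplication by `x = e_b` in the basis `1, e_a, f_a, f_a e_a`, for `b` larger than the
new index `a`; the entries are multiplied on the right of the basis elements. -/
def shiftE {B : Type u} [Ring B] [Algebra k B] (q : k) (x : B) : Matrix (Fin 4) (Fin 4) B :=
  !![x, 0, 0, 0; 0, (-q) • x, 0, 0; 0, 0, x, 0; 0, 0, 0, (-q) • x]

/-- Left multiplication by `y = f_b` in the basis `1, e_a, f_a, f_a e_a`, where `x = e_b` and `b`
is larger than the new index `a`. The off-diagonal entry comes from the relation `ExtPair.ef_lt`. -/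
def shiftF {B : Type u} [Ring B] [Algebra k B] (q : k) (x y : B) : Matrix (Fin 4) (Fin 4) B :=
  !![y, 0, 0, 0; 0, y, 0, 0; 0, -((q - q⁻¹) • x), (-q) • y, 0; 0, 0, 0, (-q) • y]

lemma mono_congr_fun {R : Type*} [Ring R] (e e' : Fin n → R) (S : Finset (Fin n)) :
    ∀ (L : List (Fin n)) (_ : ∀ b ∈ L, e b = e' b), mono e S L = mono e' S L
  | [], _ => rfl
  | a :: L, h => by
    simp only [mono, h a (by simp), mono_congr_fun e e' S L fun b hb => h b (by simp [hb])]

lemma shiftE_col {B : Type u} [Ring B] [Algebra k B] (e : Fin n → B) (S : Finset (Fin n)) :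
    ∀ (L : List (Fin n)) (i : Fin 4),
      (mono (fun b => shiftE q (e b)) S L i 0 = if i = 0 then mono e S L else 0) ∧
      (mono (fun b => shiftE q (e b)) S L i 2 = if i = 2 then mono e S L else 0)
  | [], i => by fin_cases i <;> simp [mono] <;> exact Matrix.one_apply_eq _
  | a :: L, i => by
    have ih := shiftE_col e S L
    by_cases ha : a ∈ S <;> simp only [mono, ha, if_true, if_false]
    · simp only [Matrix.mul_apply, Fin.sum_univ_four, (ih _).1, (ih _).2]
      fin_cases i <;> simp [shiftE]
    · exact ih i

lemma shiftF_col {B : Type u} [Ring B] [Algebra k B] (e f : Fin n → B) (S : Finset (Fin n)) :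
    ∀ (L : List (Fin n)) (i : Fin 4),
      mono (fun b => shiftF q (e b) (f b)) S L i 0 = if i = 0 then mono f S L else 0
  | [], i => by fin_cases i <;> simp [mono]; exact Matrix.one_apply_eq _
  | a :: L, i => by
    have ih := shiftF_col e f S L
    by_cases ha : a ∈ S <;> simp only [mono, ha, if_true, if_false]
    · simp only [Matrix.mul_apply, Fin.sum_univ_four, ih]
      fin_cases i <;> simp [shiftF]
    · exact ih i

set_option maxHeartbeats 4000000 in
/-- The inductive step of the model: adjoining a smallest index `a` to a pair supported on the
indices larger than `a`. -/
lemma extPair_step (hq : q ≠ 0) {B : Type u} [Ring B] [Algebra k B] {e f : Fin n → B}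
    (h : ExtPair q e f) (a : Fin n) (ha : ∀ b, b ≤ a → e b = 0 ∧ f b = 0) :
    ExtPair q (fun b => if b = a then matE B q else shiftE q (e b))
      (fun b => if b = a then matF B else shiftF q (e b) (f b)) := by
  have z1 : shiftE q (0 : B) = 0 := by
    ext i j; fin_cases i <;> fin_cases j <;> simp [shiftE]
  have z2 : shiftF q (0 : B) 0 = 0 := by
    ext i j; fin_cases i <;> fin_cases j <;> simp [shiftF]
  constructor
  · intro b
    by_cases hb : b = a
    · ext i j
      fin_cases i <;> fin_cases j <;> simp [hb, matE, Matrix.mul_apply, Fin.sum_univ_four]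
    · ext i j
      fin_cases i <;> fin_cases j <;> simp [hb, shiftE, Matrix.mul_apply, Fin.sum_univ_four, h.ee]
  · intro b
    by_cases hb : b = a
    · ext i j
      fin_cases i <;> fin_cases j <;> simp [hb, matF, Matrix.mul_apply, Fin.sum_univ_four]
    · ext i j
      fin_cases i <;> fin_cases j <;>
        simp [hb, shiftF, Matrix.mul_apply, Fin.sum_univ_four, h.ff, h.ef]
  · intro b c hbc
    by_cases hc : c = a
    · have hb : b ≠ a := fun hb => hbc.ne (hb.trans hc.symm)
      simp [hc, hb, (ha b (hc ▸ hbc.le)).1, z1]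
    by_cases hb : b = a
    · ext i j
      fin_cases i <;> fin_cases j <;>
        simp [hb, hc, matE, shiftE, Matrix.mul_apply, Fin.sum_univ_four, smul_smul]
    · ext i j
      fin_cases i <;> fin_cases j <;>
        simp [hb, hc, shiftE, Matrix.mul_apply, Fin.sum_univ_four, smul_smul, h.e_swap b c hbc]
  · intro b c hbc
    by_cases hc : c = a
    · have hb : b ≠ a := fun hb => hbc.ne (hb.trans hc.symm)
      simp [hc, hb, ha b (hc ▸ hbc.le), z2]
    by_cases hb : b = a
    · ext i j
      fin_cases i <;> fin_cases j <;>
        simp [hb, hc, matF, shiftF, Matrix.mul_apply, Fin.sum_univ_four, smul_smul]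
    · ext i j
      fin_cases i <;> fin_cases j <;>
        simp [hb, hc, shiftF, Matrix.mul_apply, Fin.sum_univ_four, smul_smul, h.f_swap b c hbc, h.ef_lt b c hbc, h.ef_gt b c hbc]
      match_scalars <;> field_simp <;> ring
  · intro b
    by_cases hb : b = a
    · ext i j
      fin_cases i <;> fin_cases j <;>
        simp [hb, matE, matF, Matrix.mul_apply, Fin.sum_univ_four]
    · ext i j
      fin_cases i <;> fin_cases j <;>
        simp [hb, shiftE, shiftF, Matrix.mul_apply, Fin.sum_univ_four, smul_smul, h.ee, h.ef]
  · intro b c hbc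
    by_cases hc : c = a
    · have hb : b ≠ a := fun hb => hbc.ne (hb.trans hc.symm)
      simp [hc, hb, ha b (hc ▸ hbc.le), z1, z2]
    by_cases hb : b = a
    · ext i j
      fin_cases i <;> fin_cases j <;>
        simp [hb, hc, matE, matF, shiftE, shiftF, Matrix.mul_apply, Fin.sum_univ_four, smul_smul]
    · ext i j
      fin_cases i <;> fin_cases j <;>
        simp [hb, hc, shiftE, shiftF, Matrix.mul_apply, Fin.sum_univ_four, smul_smul, h.e_swap b c hbc, h.ef_lt b c hbc] <;>
        match_scalars <;> field_simp <;> ring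
  · intro b c hbc
    by_cases hc : c = a
    · have hb : b ≠ a := fun hb => hbc.ne (hb.trans hc.symm)
      simp [hc, hb, ha b (hc ▸ hbc.le), z1, z2]
    by_cases hb : b = a
    · ext i j
      fin_cases i <;> fin_cases j <;>
        simp [hb, hc, matE, matF, shiftE, shiftF, Matrix.mul_apply, Fin.sum_univ_four, smul_smul]
    · ext i j
      fin_cases i <;> fin_cases j <;>
        simp [hb, hc, shiftE, shiftF, Matrix.mul_apply, Fin.sum_univ_four, smul_smul, h.e_swap b c hbc, h.ef_gt b c hbc]
      module

/-- Existence of an `ExtPair` in which the monomials `e_X f_Y` are linearly independent, in the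
form of dual functionals. The algebra consists of iterated `4 × 4` matrices, one layer per
index. -/
theorem exists_model (hq : q ≠ 0) :
    ∀ (L : List (Fin n)) (_ : L.Pairwise (· < ·)),
      ∃ (B : Type u) (_ : Ring B) (_ : Algebra k B) (e f : Fin n → B),
        ExtPair q e f ∧ (∀ b, b ∉ L → e b = 0 ∧ f b = 0) ∧
        ∀ I M : Finset (Fin n), ∃ χ : B →ₗ[k] k, ∀ X Y : Finset (Fin n),
          χ (mono e X L * mono f Y L) =
            if ∀ x ∈ L, (x ∈ X ↔ x ∈ I) ∧ (x ∈ Y ↔ x ∈ M) then 1 else 0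
  | [], _ => by
    refine ⟨k, inferInstance, inferInstance, 0, 0, ?_, by simp, fun I M => ⟨LinearMap.id, ?_⟩⟩
    · constructor <;> simp
    · simp [mono]
  | a :: L, hL => by
    rw [List.pairwise_cons] at hL
    obtain ⟨B, _, _, e, f, h, h0, hχ⟩ := exists_model hq L hL.2
    have haL : a ∉ L := fun ha => lt_irrefl a (hL.1 a ha)
    have hne : ∀ b ∈ L, b ≠ a := fun b hb => (hL.1 b hb).ne'
    refine ⟨Matrix (Fin 4) (Fin 4) B, inferInstance, inferInstance, _, _,
      extPair_step hq h a fun b hb => h0 b fun hbL => (hL.1 b hbL).not_ge hb, ?_, ?_⟩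
    · intro b hb
      rw [List.mem_cons, not_or] at hb
      rw [if_neg hb.1, if_neg hb.1, (h0 b hb.2).1, (h0 b hb.2).2]
      constructor <;> (ext i j; fin_cases i <;> fin_cases j <;> simp [shiftE, shiftF])
    · intro I M
      obtain ⟨χ, hχ⟩ := hχ I M
      -- Column `0` is the image of the vacuum: `e_X f_Y` puts the monomial of the smaller system in
      -- the row that records which of `e_a`, `f_a` occur.
      have hcol : ∀ X Y : Finset (Fin n), ∀ i : Fin 4,
          (mono (fun b => if b = a then matE B q else shiftE q (e b)) X (a :: L) *
            mono (fun b => if b = a then matF B else shiftF q (e b) (f b)) Y (a :: L)) i 0 =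
          if i = (if a ∈ X then (if a ∈ Y then 3 else 1) else (if a ∈ Y then 2 else 0)) then
            (if a ∈ X ∧ a ∈ Y then q else 1) • (mono e X L * mono f Y L) else 0 := by
        intro X Y i
        have r1 := mono_congr_fun (fun b => if b = a then matE B q else shiftE q (e b))
          (fun b => shiftE q (e b)) X L fun b hb => if_neg (hne b hb)
        have r2 := mono_congr_fun (fun b => if b = a then matF B else shiftF q (e b) (f b))
          (fun b => shiftF q (e b) (f b)) Y L fun b hb => if_neg (hne b hb)
        have c1 := shiftE_col (q := q) e X L
        have c2 := shiftF_col (q := q) e f Y L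
        by_cases hX : a ∈ X <;> by_cases hY : a ∈ Y <;>
          simp only [mono, hX, hY, if_true, if_false, r1, r2] <;>
          generalize mono (fun b => shiftE q (e b)) X L = U at c1 <;>
          generalize mono (fun b => shiftF q (e b) (f b)) Y L = V at c2 <;>
          fin_cases i <;>
          simp only [Matrix.mul_apply, Fin.sum_univ_four, c2, (c1 _).1, (c1 _).2] <;>
          simp [matE, matF]
      -- The factor `q⁻¹` compensates for `e_a f_a = q f_a e_a`, since row `3` belongs to `f_a e_a`.
      refine ⟨(if a ∈ I ∧ a ∈ M then q⁻¹ else 1) • χ ∘ₗ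
        (Matrix.entryLinearMap k B
          (if a ∈ I then (if a ∈ M then 3 else 1) else (if a ∈ M then 2 else 0)) 0), fun X Y => ?_⟩
      rw [LinearMap.smul_apply, LinearMap.comp_apply, Matrix.entryLinearMap_apply, hcol]
      simp only [List.forall_mem_cons]
      by_cases hX : a ∈ X <;> by_cases hY : a ∈ Y <;> by_cases hI : a ∈ I <;> by_cases hM : a ∈ M <;>
        simp [hX, hY, hI, hM, hχ, hq]

end Model
end QMatAux

/-! ### The coaction on a pair of q-exterior algebras -/

namespace QMatAux
section Coaction

/-- A matrix of elements of a `k`-algebra satisfying the defining relations of `O_q(M_n(k))`. -/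
structure IsQMatrix {k R : Type*} [Field k] [Ring R] [Algebra k R] {n : ℕ} (q : k)
    (x : Fin n → Fin n → R) : Prop where
  col : ∀ i l j, i < l → x i j * x l j = q • (x l j * x i j)
  row : ∀ i j m, j < m → x i j * x i m = q • (x i m * x i j)
  swap : ∀ i j l m, i < l → m < j → x i j * x l m = x l m * x i j
  mixed : ∀ i j l m, i < l → j < m →
    x i j * x l m = x l m * x i j + (q - q⁻¹) • (x i m * x l j)

lemma isQMatrix_X (k : Type*) [Field k] (n : ℕ) (q : k) : IsQMatrix q (X k n q) where
  col i l j h := by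
    simpa [X] using RingQuot.mkAlgHom_rel k (Rel.col (k := k) (q := q) (j := j) h)
  row i j m h := by
    simpa [X] using RingQuot.mkAlgHom_rel k (Rel.row (k := k) (q := q) (i := i) h)
  swap i j l m h h' := by
    simpa [X] using RingQuot.mkAlgHom_rel k (Rel.swap (k := k) (q := q) h h')
  mixed i j l m h h' := by
    simpa only [X, map_mul, map_add, map_smul] using
      RingQuot.mkAlgHom_rel k (Rel.mixed (k := k) (q := q) h h')

/-- A double sum vanishes if its diagonal terms and its symmetrized off-diagonal terms do. -/
lemma sum_pairs_eq_zero {V : Type*} [AddCommGroup V] {n : ℕ} (F : Fin n → Fin n → V)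
    (h0 : ∀ i, F i i = 0) (h1 : ∀ i l, i < l → F i l + F l i = 0) :
    ∑ i, ∑ l, F i l = 0 := by
  rw [← Finset.sum_product']
  refine Finset.sum_involution (fun p _ => p.swap) ?_ ?_ (by simp) (by simp)
  · rintro ⟨i, l⟩ -
    rcases lt_trichotomy i l with h | h | h
    · exact h1 i l h
    · subst h; simp [h0]
    · rw [add_comm]; exact h1 l i h
  · rintro ⟨i, l⟩ - hF heq
    have : l = i := congrArg Prod.fst heq
    subst this
    exact hF (h0 l)

variable {k B R : Type*} [Field k] [Ring B] [Algebra k B] [Ring R] [Algebra k R] {n : ℕ} {q : k}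
  {e f : Fin n → B} {x : Fin n → Fin n → R}

/-- The element `Σ_i e_i ⊗ x_{ij}` of `B ⊗ R`. -/
def coact (k : Type*) [Field k] [Algebra k B] [Algebra k R] (e : Fin n → B) (x : Fin n → Fin n → R)
    (j : Fin n) : B ⊗[k] R :=
  ∑ i, e i ⊗ₜ[k] x i j

lemma coact_mul (e f : Fin n → B) (x : Fin n → Fin n → R) (a b : Fin n) :
    coact k e x a * coact k f x b = ∑ i, ∑ l, (e i * f l) ⊗ₜ[k] (x i a * x l b) := by
  simp only [coact, Finset.sum_mul_sum, Algebra.TensorProduct.tmul_mul_tmul]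

lemma coact_sq (hx : IsQMatrix q x) (ee : ∀ a, e a * e a = 0)
    (hs : ∀ a b, a < b → e b * e a = (-q) • (e a * e b)) (j : Fin n) :
    coact k e x j * coact k e x j = 0 := by
  rw [coact_mul]
  refine sum_pairs_eq_zero _ (fun i => by simp [ee]) fun i l hil => ?_
  rw [hs i l hil, hx.col i l j hil]
  simp only [TensorProduct.tmul_smul, ← TensorProduct.smul_tmul']
  module

lemma coact_swap (hq : q ≠ 0) (hx : IsQMatrix q x) (ee : ∀ a, e a * e a = 0)
    (hs : ∀ a b, a < b → e b * e a = (-q) • (e a * e b)) (a b : Fin n) (hab : a < b) :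
    coact k e x b * coact k e x a = (-q) • (coact k e x a * coact k e x b) := by
  rw [← sub_eq_zero, coact_mul, coact_mul]
  simp only [Finset.smul_sum, ← Finset.sum_sub_distrib]
  refine sum_pairs_eq_zero _ (fun i => by simp [ee]) fun i l hil => ?_
  rw [hs i l hil, hx.mixed i a l b hil hab, hx.swap i b l a hil hab]
  simp only [TensorProduct.tmul_smul, ← TensorProduct.smul_tmul', TensorProduct.tmul_add]
  match_scalars <;> field_simp <;> ring

/-- The coaction preserves the relations of an `ExtPair`: this is where the relations of
`O_q(M_n(k))` enter. -/
theorem ExtPair.coact (hq : q ≠ 0) (h : ExtPair q e f) (hx : IsQMatrix q x) :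
    ExtPair q (coact k e x) (coact k f x) where
  ee := coact_sq hx h.ee h.e_swap
  ff := coact_sq hx h.ff h.f_swap
  e_swap := coact_swap hq hx h.ee h.e_swap
  f_swap := coact_swap hq hx h.ff h.f_swap
  ef a := by
    rw [← sub_eq_zero, coact_mul, coact_mul]
    simp only [Finset.smul_sum, ← Finset.sum_sub_distrib]
    refine sum_pairs_eq_zero _ (fun i => by simp [h.ef, TensorProduct.smul_tmul']) fun i l hil => ?_
    rw [h.ef_lt i l hil, h.ef_gt i l hil, hx.col i l a hil]
    simp only [TensorProduct.tmul_smul, ← TensorProduct.smul_tmul', TensorProduct.add_tmul]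
    match_scalars <;> field_simp <;> ring
  ef_lt a b hab := by
    rw [← sub_eq_zero, coact_mul, coact_mul, coact_mul]
    simp only [Finset.smul_sum, ← Finset.sum_sub_distrib, ← Finset.sum_add_distrib]
    refine sum_pairs_eq_zero _ (fun i => ?_) fun i l hil => ?_
    · rw [h.ef, hx.row i a b hab]
      simp only [TensorProduct.tmul_smul, ← TensorProduct.smul_tmul', TensorProduct.add_tmul]
      match_scalars <;> field_simp <;> ring
    · rw [h.ef_lt i l hil, h.ef_gt i l hil, hx.mixed i a l b hil hab, hx.swap i b l a hil hab]
      simp only [TensorProduct.tmul_smul, ← TensorProduct.smul_tmul', TensorProduct.add_tmul,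
        TensorProduct.tmul_add]
      match_scalars <;> field_simp <;> ring
  ef_gt a b hab := by
    rw [← sub_eq_zero, coact_mul, coact_mul]
    simp only [← Finset.sum_sub_distrib]
    refine sum_pairs_eq_zero _ (fun i => ?_) fun i l hil => ?_
    · rw [h.ef, hx.row i a b hab]
      simp only [TensorProduct.tmul_smul, ← TensorProduct.smul_tmul', TensorProduct.add_tmul]
      match_scalars <;> field_simp <;> ring
    · rw [h.ef_lt i l hil, h.ef_gt i l hil, hx.mixed i a l b hil hab, hx.swap i b l a hil hab]
      simp only [TensorProduct.tmul_smul, ← TensorProduct.smul_tmul', TensorProduct.add_tmul,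
        TensorProduct.tmul_add]
      match_scalars <;> field_simp <;> ring

end Coaction
end QMatAux

/-! ### Quantum minors as matrix coefficients -/

namespace QMatAux
section Minors

variable {k B R : Type*} [Field k] [Ring B] [Algebra k B] [Ring R] [Algebra k R] {n : ℕ} {q : k}
  {e : Fin n → B}

lemma mono_eq_prod (e : Fin n → B) (S : Finset (Fin n)) :
    ∀ L : List (Fin n), mono e S L = ((L.filter (· ∈ S)).map e).prod
  | [] => by simp [mono]
  | a :: L => by by_cases ha : a ∈ S <;> simp [mono, ha, mono_eq_prod e S L]

/-- The monomial `e_S` as the product of the `e_{s_l}`, where `S = {s_1 < ⋯ < s_t}`. -/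
lemma mono_eq_ofFn (e : Fin n → B) (S : Finset (Fin n)) {t : ℕ} (hS : S.card = t) :
    mono e S (List.finRange n) = (List.ofFn fun l => e (S.orderEmbOfFin hS l)).prod := by
  rw [mono_eq_prod, List.ofFn_eq_map,
    show (fun l => e (S.orderEmbOfFin hS l)) = e ∘ S.orderEmbOfFin hS from rfl, ← List.map_map,
    Finset.listMap_orderEmbOfFin_finRange]
  congr 2
  have hL : ((List.finRange n).filter (· ∈ S)).Pairwise (· < ·) :=
    (List.pairwise_lt_finRange n).filter _
  refine List.Perm.eq_of_pairwise' (r := (· ≤ ·)) ?_ (Finset.pairwise_sort S (· ≤ ·)) ?_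
  · exact hL.imp fun h => h.le
  · refine (List.perm_ext_iff_of_nodup (hL.imp fun h => h.ne) (Finset.sort_nodup _ _)).mpr fun x => ?_
    simp

lemma e_mul_mono (ee : ∀ a, e a * e a = 0) (hs : ∀ a b, a < b → e b * e a = (-q) • (e a * e b))
    (S : Finset (Fin n)) (a : Fin n) :
    ∀ (L : List (Fin n)) (_ : L.Pairwise (· < ·)) (_ : a ∈ L),
      e a * mono e S L = if a ∈ S then 0 else
        (-q) ^ cnt (S.filter (· < a)) L • mono e (insert a S) L
  | [], _, ha => by simp at ha
  | b :: L, hL, ha => by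
    rw [List.pairwise_cons] at hL
    by_cases hab : a = b
    · subst hab
      have h1 : cnt (S.filter (· < a)) (a :: L) = 0 := by
        rw [cnt_eq_card _ _ (List.nodup_cons.mpr ⟨fun h => lt_irrefl a (hL.1 a h),
          hL.2.imp fun h => h.ne⟩), Finset.card_eq_zero, Finset.filter_eq_empty_iff]
        intro x hx hx'
        have hlt := (Finset.mem_filter.mp hx').2
        rcases List.mem_cons.mp (List.mem_toFinset.mp hx) with h | h
        · exact hlt.ne h
        · exact hlt.not_gt (hL.1 x h)
      have h2 : mono e (insert a S) L = mono e S L := mono_congr e L fun b hb => by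
        simp [(hL.1 b hb).ne']
      by_cases haS : a ∈ S
      · simp [mono, haS, ← mul_assoc, ee]
      · rw [h1]; simp [mono, haS, h2]
    · have haL : a ∈ L := (List.mem_cons.mp ha).resolve_left hab
      have hba : b < a := hL.1 a haL
      have ih := e_mul_mono ee hs S a L hL.2 haL
      by_cases hb : b ∈ S
      · simp only [mono, cnt, hb, hba, Finset.mem_filter, Finset.mem_insert, or_true, and_self,
          if_true]
        rw [← mul_assoc, hs b a hba, smul_mul_assoc, mul_assoc, ih]
        split_ifs
        · simp
        · rw [mul_smul_comm, smul_smul, pow_succ']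
      · have hba' : ¬ (b = a) := hba.ne
        simp only [mono, cnt, hb, hba', Finset.mem_filter, Finset.mem_insert, or_self, false_and,
          if_false]
        exact ih

/-- The number of inversions of a word. -/
def inv {t : ℕ} (g : Fin t → Fin n) : ℕ :=
  (Finset.univ.filter fun p : Fin t × Fin t => p.1 < p.2 ∧ g p.2 < g p.1).card

lemma inv_cons {t : ℕ} (a : Fin n) (g : Fin t → Fin n) :
    inv (Fin.cons a g : Fin (t + 1) → Fin n) = (Finset.univ.filter fun l => g l < a).card + inv g := by
  simp only [inv, Finset.card_filter, Fintype.sum_prod_type, Fin.sum_univ_succ]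
  simp

/-- The product of a word in the `e_a` in terms of the standard monomials. -/
lemma prod_word (ee : ∀ a, e a * e a = 0) (hs : ∀ a b, a < b → e b * e a = (-q) • (e a * e b)) :
    ∀ {t : ℕ} (g : Fin t → Fin n), (List.ofFn fun l => e (g l)).prod =
      if Function.Injective g then
        (-q) ^ inv g • mono e (Finset.univ.image g) (List.finRange n) else 0
  | 0, g => by
    rw [if_pos (Function.injective_of_subsingleton g)]
    have : ∀ L : List (Fin n), mono e ∅ L = 1 := fun L => by rw [mono_eq_prod]; simp
    simp [inv, this]
  | t + 1, g => by
    obtain ⟨a, g, rfl⟩ : ∃ a g', g = Fin.cons a g' := ⟨g 0, Fin.tail g, (Fin.cons_self_tail g).symm⟩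
    simp only [List.ofFn_succ, List.prod_cons, Fin.cons_zero, Fin.cons_succ]
    rw [prod_word ee hs g, mul_ite, mul_zero, mul_smul_comm,
      e_mul_mono ee hs _ a _ (List.pairwise_lt_finRange n) (List.mem_finRange a), cnt_finRange]
    by_cases hg : Function.Injective g
    · by_cases ha : a ∈ Set.range g
      · rw [if_pos hg, if_pos (by simpa using ha), smul_zero,
          if_neg fun h => (Fin.cons_injective_iff.mp h).1 ha]
      · have h1 : ((Finset.univ.image g).filter (· < a)).card =
            (Finset.univ.filter fun l => g l < a).card := by
          rw [Finset.filter_image, Finset.card_image_of_injective _ hg]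
        have h2 : insert a (Finset.univ.image g) =
            Finset.univ.image (Fin.cons a g : Fin (t + 1) → Fin n) := by
          ext x; simp [Fin.exists_fin_succ, eq_comm]
        rw [if_pos hg, if_neg (by simpa using ha), if_pos (Fin.cons_injective_iff.mpr ⟨ha, hg⟩),
          smul_smul, h1, h2, inv_cons, ← pow_add, add_comm]
    · rw [if_neg hg, if_neg fun h => hg (Fin.cons_injective_iff.mp h).2]

lemma qMinor_of_card_eq (I J : Finset (Fin n)) {t : ℕ} (hI : I.card = t) (hJ : J.card = t) :
    qMinor k n q I J = ∑ σ : Equiv.Perm (Fin t), (-q) ^ inversions σ •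
      (List.ofFn fun l => X k n q (I.orderEmbOfFin hI (σ l)) (J.orderEmbOfFin hJ l)).prod := by
  subst hI
  rw [qMinor, dif_pos hJ.symm]
  rfl

lemma qMinor_of_card_ne {I J : Finset (Fin n)} (h : I.card ≠ J.card) : qMinor k n q I J = 0 := by
  rw [qMinor, dif_neg h]

lemma prod_tmul (u : Fin n → B) (v : Fin n → R) (L : List (Fin n)) :
    (L.map fun l => u l ⊗ₜ[k] v l).prod = (L.map u).prod ⊗ₜ[k] (L.map v).prod := by
  induction L with
  | nil => simp [Algebra.TensorProduct.one_def]
  | cons a L ih => simp [ih]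

lemma inv_comp {t : ℕ} (I : Finset (Fin n)) (hI : I.card = t) (σ : Equiv.Perm (Fin t)) :
    inv (fun l => I.orderEmbOfFin hI (σ l)) = inversions σ := by
  simp [inv, inversions]

lemma image_comp {t : ℕ} (I : Finset (Fin n)) (hI : I.card = t) (σ : Equiv.Perm (Fin t)) :
    Finset.univ.image (fun l => I.orderEmbOfFin hI (σ l)) = I := by
  conv_rhs => rw [← Finset.image_orderEmbOfFin_univ I hI]
  ext x
  simp only [Finset.mem_image, Finset.mem_univ, true_and]
  exact ⟨fun ⟨l, hl⟩ => ⟨σ l, hl⟩, fun ⟨l, hl⟩ => ⟨σ.symm l, by simpa using hl⟩⟩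

/-- The coaction sends `e_J` to `Σ_I e_I ⊗ [I|J]`. The words contributing to a given `I` are the
permutations of `I`, since a word with a repeated letter has product zero. -/
theorem mono_coact (ee : ∀ a, e a * e a = 0) (hs : ∀ a b, a < b → e b * e a = (-q) • (e a * e b))
    (J : Finset (Fin n)) :
    mono (coact k e (X k n q)) J (List.finRange n) =
      ∑ I : Finset (Fin n), mono e I (List.finRange n) ⊗ₜ[k] qMinor k n q I J := by
  set t := J.card with ht
  have hJ : J.card = t := rfl
  rw [mono_eq_ofFn _ J hJ]
  -- Expand the product of sums over all words `g`, then group the words by their image.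
  have h1 : (List.ofFn fun l => coact k e (X k n q) (J.orderEmbOfFin hJ l)).prod =
      ∑ g : Fin t → Fin n, (List.ofFn fun l => e (g l)).prod ⊗ₜ[k]
        (List.ofFn fun l => X k n q (g l) (J.orderEmbOfFin hJ l)).prod := by
    have := (MultilinearMap.mkPiAlgebraFin k t (B ⊗[k] A k n q)).map_sum
      (g := fun l (i : Fin n) => e i ⊗ₜ[k] X k n q i (J.orderEmbOfFin hJ l))
    simp only [MultilinearMap.mkPiAlgebraFin_apply] at this
    refine this.trans (Finset.sum_congr rfl fun g _ => ?_)
    simp only [List.ofFn_eq_map]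
    exact prod_tmul _ _ _
  rw [h1, ← Finset.sum_fiberwise (g := fun g : Fin t → Fin n => Finset.univ.image g)]
  refine Finset.sum_congr rfl fun I _ => ?_
  by_cases hI : I.card = t
  · rw [qMinor_of_card_eq I J hI hJ, TensorProduct.tmul_sum]
    symm
    refine Finset.sum_bij (fun σ _ l => I.orderEmbOfFin hI (σ l)) ?_ ?_ ?_ ?_
    · intro σ _
      simp only [Finset.mem_filter, Finset.mem_univ, true_and]
      exact image_comp I hI σ
    · intro σ _ τ _ h
      ext l
      exact congrArg _ ((I.orderEmbOfFin hI).injective (congrFun h l))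
    · intro g hg
      simp only [Finset.mem_filter, Finset.mem_univ, true_and] at hg
      have hinj : Function.Injective g := by
        rw [← Set.injOn_univ, ← Finset.coe_univ, ← Finset.card_image_iff, hg, hI]
        simp
      have hmem : ∀ l, g l ∈ I := fun l => hg ▸ Finset.mem_image_of_mem g (Finset.mem_univ l)
      let s : Fin t → Fin t := fun l => (I.orderIsoOfFin hI).symm ⟨g l, hmem l⟩
      have hs : Function.Injective s := fun l l' h => by
        have := (I.orderIsoOfFin hI).symm.injective h
        exact hinj (congrArg Subtype.val this)
      refine ⟨Equiv.ofBijective s (Finite.injective_iff_bijective.mp hs), Finset.mem_univ _, ?_⟩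
      funext l
      simp [s, ← Finset.coe_orderIsoOfFin_apply]
    · intro σ _
      have hinj : Function.Injective fun l => I.orderEmbOfFin hI (σ l) :=
        (I.orderEmbOfFin hI).injective.comp σ.injective
      rw [prod_word ee hs, if_pos hinj, image_comp, inv_comp, TensorProduct.tmul_smul,
        TensorProduct.smul_tmul']
  · rw [qMinor_of_card_ne (fun h => hI h), TensorProduct.tmul_zero]
    refine Finset.sum_eq_zero fun g hg => ?_
    simp only [Finset.mem_filter, Finset.mem_univ, true_and] at hg
    rw [prod_word ee hs, if_neg, TensorProduct.zero_tmul]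
    intro hinj
    apply hI
    rw [← hg, Finset.card_image_of_injective _ hinj]
    simp

end Minors
end QMatAux

/-! ### The commutation relation -/

namespace QMatAux
section Final

variable {k : Type*} [Field k] {n : ℕ} {q : k}

/-- Both sides say that `(I', M')` and `(I, M)` have the same intersection and the same union, and
that `|I'| = |I|`. -/
lemma mid_symm {I M I' M' : Finset (Fin n)} :
    (I ∈ mid I' M' ∧ snat n I' M' I = M) ↔ (I' ∈ mid I M ∧ M' = snat n I M I') := by
  simp only [mem_mid, snat, Finset.ext_iff, Finset.subset_iff, Finset.mem_union, Finset.mem_inter,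
    Finset.mem_sdiff, eq_comm (a := I.card)]
  constructor
  · rintro ⟨⟨h1, h2, h3⟩, h4⟩
    refine ⟨⟨fun x => ?_, fun x => ?_, h3⟩, fun x => ?_⟩ <;>
      (have := @h1 x; have := @h2 x; have := h4 x; tauto)
  · rintro ⟨⟨h1, h2, h3⟩, h4⟩
    refine ⟨⟨fun x => ?_, fun x => ?_, h3⟩, fun x => ?_⟩ <;>
      (have := @h1 x; have := @h2 x; have := h4 x; tauto)

/-- The unnormalized relation: compare the coefficients of `e_I f_M` after applying the coaction to
the straightening relation. -/
theorem prod_minors (hq : q ≠ 0) (I J M N : Finset (Fin n)) :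
    qMinor k n q I J * qMinor k n q M N =
      ∑ T ∈ mid J N, coef q J N T • ∑ S ∈ mid I M, coef q⁻¹ S (snat n I M S) I •
        (qMinor k n q (snat n I M S) (snat n J N T) * qMinor k n q S T) := by
  obtain ⟨B, _, _, e, f, h, -, hχ⟩ := exists_model hq (List.finRange n) (List.pairwise_lt_finRange n)
  obtain ⟨χ, hχ⟩ := hχ I M
  have hχ' : ∀ Y Z : Finset (Fin n), χ (mono e Y (List.finRange n) * mono f Z (List.finRange n)) =
      if Y = I ∧ Z = M then 1 else 0 := by
    intro Y Z
    rw [hχ]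
    congr 1
    simp only [List.mem_finRange, true_imp_iff, forall_and, Finset.ext_iff]
  have hrev : ∀ M' I' : Finset (Fin n),
      χ (mono f M' (List.finRange n) * mono e I' (List.finRange n)) =
        if I' ∈ mid I M ∧ M' = snat n I M I' then coef q⁻¹ I' M' I else 0 := by
    intro M' I'
    rw [straighten_rev hq h, map_sum]
    simp only [map_smul, hχ', smul_eq_mul, mul_ite, mul_one, mul_zero]
    simp only [ite_and, Finset.sum_ite_eq', ← mid_symm]
  -- `φ = χ ⊗ id` extracts the coefficient of `e_I f_M`.
  let φ : B ⊗[k] A k n q →ₗ[k] A k n q :=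
    (TensorProduct.lid k (A k n q)).toLinearMap ∘ₗ TensorProduct.map χ LinearMap.id
  have hφ : ∀ b a, φ (b ⊗ₜ[k] a) = χ b • a := fun b a => by simp [φ]
  have key := congrArg φ (straighten hq (h.coact hq (isQMatrix_X k n q)) J N)
  simp only [mono_coact h.ee h.e_swap, mono_coact h.ff h.f_swap, Finset.sum_mul_sum,
    Algebra.TensorProduct.tmul_mul_tmul, map_sum, map_smul, hφ, hχ', hrev] at key
  rw [Finset.sum_eq_single I, Finset.sum_eq_single M] at key
  · rw [if_pos ⟨rfl, rfl⟩, one_smul] at key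
    rw [key]
    refine Finset.sum_congr rfl fun T _ => ?_
    congr 1
    rw [Finset.sum_comm]
    simp only [ite_and, ite_smul, zero_smul]
    rw [← Finset.sum_filter_add_sum_filter_not Finset.univ (· ∈ mid I M)]
    rw [Finset.sum_eq_zero (s := Finset.univ.filter (¬ · ∈ mid I M)), add_zero]
    · refine Finset.sum_congr (by ext; simp) fun S hS => ?_
      simp [hS]
    · intro S hS
      simp [(Finset.mem_filter.mp hS).2]
  · intro M' _ hM'
    simp [hM']
  · simp
  · intro I' _ hI'
    simp [hI']
  · simp

lemma xiq_inv (I J : Finset (Fin n)) : xiq k n q⁻¹ I J = xiq k n q I J := by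
  simp only [xiq, negqInt_inv]

lemma coef_inv {I M S : Finset (Fin n)} (hS : S ∈ mid I M) :
    coef q⁻¹ S (snat n I M S) I = (q ^ (I ∩ M).card)⁻¹ *
      ((-(q - q⁻¹)) ^ (I \ S).card * (-q) ^ (-(Lfun n S I M)) * xiq k n q (I \ S) (S \ I)) := by
  have h1 : snat n S (snat n I M S) I = M := (mid_symm.mpr ⟨hS, rfl⟩).2
  have h2 : S ∩ snat n I M S = I ∩ M := by
    ext x
    have : x ∈ I ∩ M → x ∈ S := fun h => (mem_mid.mp hS).1 h
    simp only [snat, Finset.mem_union, Finset.mem_inter, Finset.mem_sdiff] at this ⊢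
    tauto
  rw [coef, xiq_inv, h2, Lnat, Lfun, h1, Finset.union_comm (M \ I), inv_pow, inv_inv,
    show q⁻¹ - q = -(q - q⁻¹) by ring, show -q⁻¹ = (-q)⁻¹ from neg_inv, inv_zpow, zpow_neg]

lemma setLE_refl (I : Finset (Fin n)) : setLE n I I := ⟨rfl, fun _ _ => le_rfl⟩

lemma snat_self (I M : Finset (Fin n)) : snat n I M I = M := by
  ext x
  simp only [snat, Finset.mem_union, Finset.mem_inter, Finset.mem_sdiff]
  tauto

lemma xiq_empty : xiq k n q ∅ ∅ = 1 := by
  rw [xiq_eq_prod _ _ rfl, Finset.prod_empty]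

/-- The commutation relation, valid for all `n` and, minors with index sets of different sizes being
zero by convention, for all index sets. -/
theorem commutation (hq : q ≠ 0) (I J M N : Finset (Fin n)) :
    (q ^ (I ∩ M).card) • (qMinor k n q I J * qMinor k n q M N)
    = (q ^ (J ∩ N).card) • (qMinor k n q M N * qMinor k n q I J)
      + (q ^ (J ∩ N).card) •
          ∑ S ∈ sLE n I M, ∑ T ∈ sGE n J N,
            (if (S, T) = (I, J) then 0 else
                ((-(q - q⁻¹)) ^ (I \ S).card * (-q) ^ (-(Lfun n S I M)) *
                    xiq k n q (I \ S) (S \ I)) *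
                  ((q - q⁻¹) ^ (T \ J).card * (-q) ^ (Lnat n T J N) *
                    xiq k n q (T \ J) (J \ T))) •
              (qMinor k n q (snat n I M S) (snat n J N T) * qMinor k n q S T) := by
  set a : Finset (Fin n) → k := fun S =>
    (-(q - q⁻¹)) ^ (I \ S).card * (-q) ^ (-(Lfun n S I M)) * xiq k n q (I \ S) (S \ I) with ha
  set b : Finset (Fin n) → k := fun T =>
    (q - q⁻¹) ^ (T \ J).card * (-q) ^ (Lnat n T J N) * xiq k n q (T \ J) (J \ T) with hb
  set Q : Finset (Fin n) → Finset (Fin n) → A k n q := fun S T =>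
    qMinor k n q (snat n I M S) (snat n J N T) * qMinor k n q S T with hQ
  have hsLE : sLE n I M ⊆ mid I M := fun S hS => by
    simp only [sLE, Finset.mem_filter, Finset.mem_powerset] at hS
    exact mem_mid.mpr ⟨hS.2.1, hS.1, hS.2.2.1⟩
  have hsGE : sGE n J N ⊆ mid J N := fun T hT => by
    simp only [sGE, Finset.mem_filter, Finset.mem_powerset] at hT
    exact mem_mid.mpr ⟨hT.2.1, hT.1, hT.2.2.1⟩
  have a0 : ∀ S ∈ mid I M, S ∉ sLE n I M → a S = 0 := by
    intro S hS hS'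
    by_contra h
    obtain ⟨h1, h2, h3⟩ := mem_mid.mp hS
    refine hS' ?_
    simp only [sLE, Finset.mem_filter, Finset.mem_powerset]
    exact ⟨h2, h1, h3, setLE_of_xiq_ne_zero S I h3.symm (right_ne_zero_of_mul h)⟩
  have b0 : ∀ T ∈ mid J N, T ∉ sGE n J N → b T = 0 := by
    intro T hT hT'
    by_contra h
    obtain ⟨h1, h2, h3⟩ := mem_mid.mp hT
    refine hT' ?_
    simp only [sGE, Finset.mem_filter, Finset.mem_powerset]
    exact ⟨h2, h1, h3, setLE_of_xiq_ne_zero J T h3 (right_ne_zero_of_mul h)⟩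
  have hI : I ∈ sLE n I M := by
    simp only [sLE, Finset.mem_filter, Finset.mem_powerset]
    exact ⟨Finset.subset_union_left, Finset.inter_subset_left, trivial, setLE_refl I⟩
  have hJ : J ∈ sGE n J N := by
    simp only [sGE, Finset.mem_filter, Finset.mem_powerset]
    exact ⟨Finset.subset_union_left, Finset.inter_subset_left, trivial, setLE_refl J⟩
  have a1 : a I = 1 := by
    simp only [ha, Lfun, Finset.sdiff_self, sub_self, neg_zero, zpow_zero, xiq_empty, mul_one,
      Finset.card_empty, pow_zero]
  have b1 : b J = 1 := by
    simp only [hb, Lnat, Finset.sdiff_self, sub_self, zpow_zero, xiq_empty, mul_one,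
      Finset.card_empty, pow_zero]
  have hQ1 : Q I J = qMinor k n q M N * qMinor k n q I J := by
    simp only [hQ, snat_self]
  have hfull : q ^ (I ∩ M).card • (qMinor k n q I J * qMinor k n q M N) =
      q ^ (J ∩ N).card • ∑ S ∈ sLE n I M, ∑ T ∈ sGE n J N, (a S * b T) • Q S T := by
    rw [prod_minors hq, Finset.sum_comm, ← Finset.sum_subset hsGE, Finset.smul_sum, Finset.smul_sum]
    · refine Finset.sum_congr rfl fun T hT => ?_
      rw [← Finset.sum_subset hsLE, Finset.smul_sum, Finset.smul_sum, Finset.smul_sum]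
      · refine Finset.sum_congr rfl fun S hS => ?_
        rw [coef_inv (hsLE hS), smul_smul, smul_smul, smul_smul, coef]
        congr 1
        have := pow_ne_zero (I ∩ M).card hq
        simp only [ha, hb]
        field_simp
      · intro S hS hS'
        rw [coef_inv hS]
        have := a0 S hS hS'
        simp only [ha] at this
        rw [this, mul_zero, zero_smul]
    · intro T hT hT'
      have := b0 T hT hT'
      simp only [hb] at this
      rw [coef, this, mul_zero, zero_smul]
  have hsplit : ∑ S ∈ sLE n I M, ∑ T ∈ sGE n J N, (a S * b T) • Q S T =
      Q I J + ∑ S ∈ sLE n I M, ∑ T ∈ sGE n J N,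
        (if (S, T) = (I, J) then 0 else a S * b T) • Q S T := by
    have h1 : Q I J = ∑ S ∈ sLE n I M, ∑ T ∈ sGE n J N, if S = I then
        (if T = J then Q S T else 0) else 0 := by
      simp [Finset.sum_ite_eq', hI, hJ]
    rw [h1, ← Finset.sum_add_distrib]
    refine Finset.sum_congr rfl fun S _ => ?_
    rw [← Finset.sum_add_distrib]
    refine Finset.sum_congr rfl fun T _ => ?_
    by_cases hS : S = I
    · by_cases hT : T = J
      · rw [hS, hT, if_pos rfl, if_pos rfl, if_pos rfl, a1, b1, mul_one, one_smul, zero_smul,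
          add_zero]
      · rw [if_pos hS, if_neg hT, if_neg (fun h => hT (congrArg Prod.snd h)), zero_add]
    · rw [if_neg hS, if_neg (fun h => hS (congrArg Prod.fst h)), zero_add]
  rw [hfull, hsplit, smul_add, hQ1]

end Final

end QMatAux

/-- Theorem 6.3: the commutation relation (6.4) with all extra terms in preferred order. -/
theorem stmt19 (k : Type*) [Field k] (n : ℕ) (hn : 0 < n) (q : k) (hq : q ≠ 0)
    (I J M N : Finset (Fin n)) (hIJ : I.card = J.card) (hMN : M.card = N.card) :
    (q ^ (I ∩ M).card) • (qMinor k n q I J * qMinor k n q M N)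
    = (q ^ (J ∩ N).card) • (qMinor k n q M N * qMinor k n q I J)
      + (q ^ (J ∩ N).card) •
          ∑ S ∈ sLE n I M, ∑ T ∈ sGE n J N,
            (if (S, T) = (I, J) then 0 else
                ((-(q - q⁻¹)) ^ (I \ S).card * (-q) ^ (-(Lfun n S I M)) *
                    xiq k n q (I \ S) (S \ I)) *
                  ((q - q⁻¹) ^ (T \ J).card * (-q) ^ (Lnat n T J N) *
                    xiq k n q (T \ J) (J \ T))) •
              (qMinor k n q (snat n I M S) (snat n J N T) * qMinor k n q S T) :=
  QMatAux.commutation hq I J M N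

end
end
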